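/- arXiv:1107.0208 — 2 statements merged into one kernel-verified Lean document; each statement's English description precedes it below -/
import Mathlib

section
/- Let μ be a compactly supported Borel probability measure on [0, ∞) whose free cumulants (k_j)_{j∈ℕ} are all strictly positive, i.e. ∫ tⁿ dμ(t) = ∑_{π ∈ NC(n)} ∏_{V block of π} k_{|V|} for all n ≥ 1 with k_j > 0 for every j. Then the maximum ρ_μ of the support of μ satisfies log ρ_μ = sup{ (1/m₁(p)) ∑_{n≥1} p_n log(k_n / p_n) + Θ(m₁(p))/m₁(p) : p ∈ 𝔐₁¹(ℕ) }. -/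
open MeasureTheory Finset
open scoped ENNReal

noncomputable section

open Classical in
/-- The set of non-crossing partitions of `{1, …, n}`. -/
def NCP (n : ℕ) : Finset (Finset (Finset ℕ)) :=
  ((Finset.Icc 1 n).powerset.powerset).filter fun π =>
    (∀ V ∈ π, V.Nonempty) ∧
    (∀ a ∈ Finset.Icc 1 n, ∃ V ∈ π, a ∈ V) ∧
    (∀ V₁ ∈ π, ∀ V₂ ∈ π, V₁ ≠ V₂ → V₁ ∩ V₂ = ∅) ∧
    ¬ ∃ V₁ ∈ π, ∃ V₂ ∈ π, V₁ ≠ V₂ ∧ ∃ x₁ ∈ V₁, ∃ y₁ ∈ V₁, ∃ x₂ ∈ V₂, ∃ y₂ ∈ V₂,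
        x₁ < x₂ ∧ x₂ < y₁ ∧ y₁ < y₂

/-- `Θ(m) = log(m−1) − m log(1−1/m)`. -/
def Theta (m : ℝ) : ℝ := Real.log (m - 1) - m * Real.log (1 - m⁻¹)

/-- Non-crossing partitions of a finite set, as a predicate. -/
def IsNC (S : Finset ℕ) (π : Finset (Finset ℕ)) : Prop :=
  (∀ V ∈ π, V ⊆ S) ∧ (∀ V ∈ π, V.Nonempty) ∧
  (∀ a ∈ S, ∃ V ∈ π, a ∈ V) ∧
  (∀ V₁ ∈ π, ∀ V₂ ∈ π, ∀ x ∈ V₁, x ∈ V₂ → V₁ = V₂) ∧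
  (∀ V₁ ∈ π, ∀ V₂ ∈ π, ∀ x₁ ∈ V₁, ∀ y₁ ∈ V₁, ∀ x₂ ∈ V₂, ∀ y₂ ∈ V₂,
    x₁ < x₂ → x₂ < y₁ → y₁ < y₂ → V₁ = V₂)

open Classical in
/-- Non-crossing partitions of a finite set. -/
def NCS (S : Finset ℕ) : Finset (Finset (Finset ℕ)) :=
  (S.powerset.powerset).filter (IsNC S)

lemma mem_NCS {S : Finset ℕ} {π : Finset (Finset ℕ)} : π ∈ NCS S ↔ IsNC S π := by
  simp only [NCS, mem_filter, mem_powerset, and_iff_right_iff_imp]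
  intro h V hV
  exact mem_powerset.2 (h.1 V hV)

lemma NCP_eq (n : ℕ) : NCP n = NCS (Finset.Icc 1 n) := by
  ext π
  rw [mem_NCS]
  simp only [NCP, mem_filter, mem_powerset, IsNC]
  constructor
  · rintro ⟨h0, h1, h2, h3, h4⟩
    refine ⟨fun V hV => mem_powerset.1 (h0 hV), h1, h2, ?_, ?_⟩
    · intro V₁ hV₁ V₂ hV₂ x hx hx'
      by_contra hne
      have := h3 V₁ hV₁ V₂ hV₂ hne
      have hh : x ∈ V₁ ∩ V₂ := mem_inter.2 ⟨hx, hx'⟩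
      rw [this] at hh
      simp at hh
    · intro V₁ hV₁ V₂ hV₂ x₁ hx₁ y₁ hy₁ x₂ hx₂ y₂ hy₂ a b c
      by_contra hne
      exact h4 ⟨V₁, hV₁, V₂, hV₂, hne, x₁, hx₁, y₁, hy₁, x₂, hx₂, y₂, hy₂, a, b, c⟩
  · rintro ⟨h0, h1, h2, h3, h4⟩
    refine ⟨fun V hV => mem_powerset.2 (h0 V hV), h1, h2, ?_, ?_⟩
    · intro V₁ hV₁ V₂ hV₂ hne
      ext x
      simp only [mem_inter, notMem_empty, iff_false]
      rintro ⟨ha, hb⟩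
      exact hne (h3 V₁ hV₁ V₂ hV₂ x ha hb)
    · rintro ⟨V₁, hV₁, V₂, hV₂, hne, x₁, hx₁, y₁, hy₁, x₂, hx₂, y₂, hy₂, a, b, c⟩
      exact hne (h4 V₁ hV₁ V₂ hV₂ x₁ hx₁ y₁ hy₁ x₂ hx₂ y₂ hy₂ a b c)

/-- Weighted sum over non-crossing partitions; the block of `a` counts `s` extra elements. -/
def ncU (k : ℕ → ℝ) (s a : ℕ) (S : Finset ℕ) : ℝ :=
  ∑ π ∈ NCS S, ∏ V ∈ π, k (V.card + if a ∈ V then s else 0)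

lemma ncU_zero (k : ℕ → ℝ) (a b : ℕ) (S : Finset ℕ) : ncU k 0 a S = ncU k 0 b S := by
  simp [ncU]

lemma NCS_empty : NCS ∅ = {∅} := by
  ext π
  rw [mem_NCS, mem_singleton]
  constructor
  · rintro ⟨h0, h1, -⟩
    by_contra hne
    obtain ⟨V, hV⟩ := Finset.nonempty_iff_ne_empty.2 hne
    obtain ⟨x, hx⟩ := h1 V hV
    exact absurd (h0 V hV hx) (by simp)
  · rintro rfl
    simp [IsNC]

lemma ncU_empty (k : ℕ → ℝ) (s a : ℕ) : ncU k s a ∅ = 1 := by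
  simp [ncU, NCS_empty]

lemma ncU_nonneg (k : ℕ → ℝ) (hk : ∀ j, 1 ≤ j → 0 < k j) (s a : ℕ) (S : Finset ℕ) :
    0 ≤ ncU k s a S := by
  refine Finset.sum_nonneg fun π hπ => Finset.prod_nonneg fun V hV => (hk _ ?_).le
  have := ((mem_NCS.1 hπ).2.1 V hV).card_pos
  omega

lemma part_single (k : ℕ → ℝ) (s a e : ℕ) (hae : a < e) :
    ∑ π ∈ (NCS (Finset.Ico a e)).filter (fun π => {a} ∈ π),
      ∏ V ∈ π, k (V.card + if a ∈ V then s else 0) =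
    k (s + 1) * ncU k 0 0 (Finset.Ico (a + 1) e) := by
  rw [ncU, Finset.mul_sum]
  refine Finset.sum_bij' (fun π _ => π.erase {a}) (fun π _ => insert {a} π) ?_ ?_ ?_ ?_ ?_
  · intro π hπ
    rw [mem_filter, mem_NCS] at hπ
    obtain ⟨⟨h0, h1, h2, h3, h4⟩, h5⟩ := hπ
    rw [mem_NCS]
    refine ⟨?_, ?_, ?_, ?_, ?_⟩
    · intro V hV x hx
      have hV' := mem_of_mem_erase hV
      have hx' := h0 V hV' hx
      have : x ≠ a := by
        rintro rfl
        exact ne_of_mem_erase hV (h3 V hV' _ h5 x hx (by simp))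
      simp only [Finset.mem_Ico] at hx' ⊢
      omega
    · exact fun V hV => h1 V (mem_of_mem_erase hV)
    · intro x hx
      simp only [Finset.mem_Ico] at hx
      obtain ⟨V, hV, hxV⟩ := h2 x (by simp only [Finset.mem_Ico]; omega)
      refine ⟨V, mem_erase.2 ⟨?_, hV⟩, hxV⟩
      rintro rfl
      simp at hxV
      omega
    · exact fun V hV W hW => h3 V (mem_of_mem_erase hV) W (mem_of_mem_erase hW)
    · exact fun V hV W hW => h4 V (mem_of_mem_erase hV) W (mem_of_mem_erase hW)
  · intro π hπ
    rw [mem_NCS] at hπ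
    obtain ⟨h0, h1, h2, h3, h4⟩ := hπ
    rw [mem_filter, mem_NCS]
    refine ⟨⟨?_, ?_, ?_, ?_, ?_⟩, mem_insert_self _ _⟩
    · intro V hV x hx
      rcases mem_insert.1 hV with rfl | hV
      · simp at hx; subst hx; simp [hae]
      · have := h0 V hV hx
        simp only [Finset.mem_Ico] at this ⊢
        omega
    · intro V hV
      rcases mem_insert.1 hV with rfl | hV
      · simp
      · exact h1 V hV
    · intro x hx
      simp only [Finset.mem_Ico] at hx
      by_cases hxa : x = a
      · exact ⟨{a}, by simp, by simp [hxa]⟩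
      · obtain ⟨V, hV, hxV⟩ := h2 x (by simp only [Finset.mem_Ico]; omega)
        exact ⟨V, mem_insert_of_mem hV, hxV⟩
    · intro V hV W hW x hx hx'
      rcases mem_insert.1 hV with rfl | hV <;> rcases mem_insert.1 hW with rfl | hW
      · rfl
      · have := h0 W hW hx'; simp at hx this; omega
      · have := h0 V hV hx; simp at hx' this; omega
      · exact h3 V hV W hW x hx hx'
    · intro V hV W hW x₁ hx₁ y₁ hy₁ x₂ hx₂ y₂ hy₂ l1 l2 l3
      rcases mem_insert.1 hV with rfl | hV <;> rcases mem_insert.1 hW with rfl | hW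
      · rfl
      · simp at hx₁ hy₁; omega
      · simp at hx₂ hy₂; omega
      · exact h4 V hV W hW x₁ hx₁ y₁ hy₁ x₂ hx₂ y₂ hy₂ l1 l2 l3
  · intro π hπ
    exact insert_erase (mem_filter.1 hπ).2
  · intro π hπ
    rw [mem_NCS] at hπ
    refine erase_insert fun h => ?_
    have := hπ.1 _ h (mem_singleton_self a)
    simp at this
  · intro π hπ
    rw [mem_filter, mem_NCS] at hπ
    obtain ⟨⟨h0, h1, h2, h3, h4⟩, h5⟩ := hπ
    rw [← Finset.mul_prod_erase _ _ h5]
    congr 1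
    · simp [add_comm]
    · refine Finset.prod_congr rfl fun V hV => ?_
      have : a ∉ V := fun ha => ne_of_mem_erase hV (h3 V (mem_of_mem_erase hV) _ h5 a ha (by simp))
      simp [this]

/-- `b` is the second smallest element of the block of `a`. -/
def Sec (a b : ℕ) (π : Finset (Finset ℕ)) : Prop :=
  ∃ V ∈ π, a ∈ V ∧ b ∈ V ∧ a < b ∧ ∀ x ∈ V, x = a ∨ b ≤ x

/-- Add `a` to the block of `b`. -/
def addB (a b : ℕ) (V : Finset ℕ) : Finset ℕ := if b ∈ V then insert a V else V

open Classical in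
lemma part_sec (k : ℕ → ℝ) (s a b e : ℕ) (hab : a < b) (hbe : b < e) :
    ∑ π ∈ (NCS (Finset.Ico a e)).filter (Sec a b),
      ∏ V ∈ π, k (V.card + if a ∈ V then s else 0) =
    ncU k 0 0 (Finset.Ico (a + 1) b) * ncU k (s + 1) b (Finset.Ico b e) := by
  rw [ncU, ncU, Finset.sum_mul_sum, ← Finset.sum_product']
  symm
  refine Finset.sum_bij' (fun στ _ => στ.1 ∪ στ.2.image (addB a b))
    (fun π _ => (π.filter (· ⊆ Finset.Ico (a+1) b),
      (π.filter (¬ · ⊆ Finset.Ico (a+1) b)).image (fun V => V.erase a))) ?_ ?_ ?_ ?_ ?_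
  · rintro ⟨σ, τ⟩ h
    rw [mem_product, mem_NCS, mem_NCS] at h
    obtain ⟨⟨h0, h1, h2, h3, h4⟩, ⟨g0, g1, g2, g3, g4⟩⟩ := h
    simp only at h0 h1 h2 h3 h4 g0 g1 g2 g3 g4
    have h0' : ∀ V ∈ σ, ∀ x ∈ V, a < x ∧ x < b := by
      intro V hV x hx
      have := h0 V hV hx
      simp at this; omega
    have g0' : ∀ V ∈ τ, ∀ x ∈ V, b ≤ x ∧ x < e := by
      intro V hV x hx
      have := g0 V hV hx
      simp at this; omega
    have key : ∀ W ∈ σ ∪ τ.image (addB a b), W ∈ σ ∨ ∃ V ∈ τ, V ⊆ W ∧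
        (∀ x ∈ W, x ∈ V ∨ (x = a ∧ b ∈ V)) ∧ W = addB a b V := by
      intro W hW
      rcases mem_union.1 hW with hW | hW
      · exact Or.inl hW
      · right
        obtain ⟨V, hV, rfl⟩ := mem_image.1 hW
        refine ⟨V, hV, ?_, ?_, rfl⟩
        · unfold addB; split_ifs <;> simp
        · intro x hx
          unfold addB at hx
          split_ifs at hx with hb
          · rcases mem_insert.1 hx with h | h
            · exact Or.inr ⟨h, hb⟩
            · exact Or.inl h
          · exact Or.inl hx
    obtain ⟨B, hB, hbB⟩ := g2 b (by simp [hbe])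
    rw [mem_filter, mem_NCS]
    refine ⟨⟨?_, ?_, ?_, ?_, ?_⟩, ?_⟩
    · intro W hW x hx
      simp only [Finset.mem_Ico]
      rcases key W hW with hW | ⟨V, hV, -, hV2, -⟩
      · have := h0' W hW x hx; omega
      · rcases hV2 x hx with h | h
        · have := g0' V hV x h; omega
        · omega
    · intro W hW
      rcases key W hW with hW | ⟨V, hV, hV1, hV2, -⟩
      · exact h1 W hW
      · exact (g1 V hV).mono hV1
    · intro x hx
      simp only [Finset.mem_Ico] at hx
      by_cases hxa : x = a
      · exact ⟨addB a b B, mem_union_right _ (mem_image_of_mem _ hB), by simp [addB, hbB, hxa]⟩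
      by_cases hxb : x < b
      · obtain ⟨V, hV, hxV⟩ := h2 x (by simp only [Finset.mem_Ico]; omega)
        exact ⟨V, mem_union_left _ hV, hxV⟩
      · obtain ⟨V, hV, hxV⟩ := g2 x (by simp only [Finset.mem_Ico]; omega)
        refine ⟨addB a b V, mem_union_right _ (mem_image_of_mem _ hV), ?_⟩
        unfold addB; split_ifs <;> simp [hxV]
    · intro W hW W' hW' x hx hx'
      rcases key W hW with hW | ⟨V, hV, hV1, hV2, rfl⟩ <;>
      rcases key W' hW' with hW' | ⟨V', hV', hV1', hV2', rfl⟩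
      · exact h3 W hW W' hW' x hx hx'
      · have := h0' W hW x hx
        rcases hV2' x hx' with h | h
        · have := g0' V' hV' x h; omega
        · omega
      · have := h0' W' hW' x hx'
        rcases hV2 x hx with h | h
        · have := g0' V hV x h; omega
        · omega
      · rcases hV2 x hx with h | h <;> rcases hV2' x hx' with h' | h'
        · rw [g3 V hV V' hV' x h h']
        · have := g0' V hV x h; omega
        · have := g0' V' hV' x h'; omega
        · rw [g3 V hV V' hV' b h.2 h'.2]
    · intro W hW W' hW' x₁ hx₁ y₁ hy₁ x₂ hx₂ y₂ hy₂ l1 l2 l3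
      rcases key W hW with hW | ⟨V, hV, hV1, hV2, rfl⟩ <;>
      rcases key W' hW' with hW' | ⟨V', hV', hV1', hV2', rfl⟩
      · exact h4 W hW W' hW' x₁ hx₁ y₁ hy₁ x₂ hx₂ y₂ hy₂ l1 l2 l3
      · have q1 := h0' W hW x₁ hx₁
        have q2 := h0' W hW y₁ hy₁
        rcases hV2' x₂ hx₂ with h | h
        · have := g0' V' hV' x₂ h; omega
        · omega
      · have q1 := h0' W' hW' x₂ hx₂
        have q2 := h0' W' hW' y₂ hy₂
        rcases hV2 y₁ hy₁ with h | h
        · have := g0' V hV y₁ h; omega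
        · omega
      · have hx₂' : x₂ ∈ V' := by
          rcases hV2' x₂ hx₂ with h' | h'
          · exact h'
          · rcases hV2 x₁ hx₁ with h | h
            · have := g0' V hV x₁ h; omega
            · omega
        have hx₂g := g0' V' hV' x₂ hx₂'
        have hy₁' : y₁ ∈ V := by
          rcases hV2 y₁ hy₁ with h | h
          · exact h
          · omega
        have hy₂' : y₂ ∈ V' := by
          rcases hV2' y₂ hy₂ with h | h
          · exact h
          · omega
        rcases hV2 x₁ hx₁ with h | h
        · rw [g4 V hV V' hV' x₁ h y₁ hy₁' x₂ hx₂' y₂ hy₂' l1 l2 l3]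
        · rcases hx₂g.1.eq_or_lt with hh | hh
          · subst hh
            rw [g3 V hV V' hV' _ h.2 hx₂']
          · rw [g4 V hV V' hV' b h.2 y₁ hy₁' x₂ hx₂' y₂ hy₂' hh l2 l3]
    · refine ⟨addB a b B, mem_union_right _ (mem_image_of_mem _ hB), by simp [addB, hbB],
        by simp [addB, hbB], hab, ?_⟩
      intro x hx
      simp only [addB, hbB, if_true] at hx
      rcases mem_insert.1 hx with h | h
      · exact Or.inl h
      · exact Or.inr (g0' B hB x h).1
  · intro π hπ
    rw [mem_filter, mem_NCS] at hπ
    obtain ⟨⟨h0, h1, h2, h3, h4⟩, A, hA, haA, hbA, -, hAx⟩ := hπ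
    have h0' : ∀ V ∈ π, ∀ x ∈ V, a ≤ x ∧ x < e := by
      intro V hV x hx
      have := h0 V hV hx
      simpa using this
    have hAn : ¬ A ⊆ Finset.Ico (a+1) b := fun h => by
      have := h haA; simp at this
    have key : ∀ V ∈ π, ¬ V ⊆ Finset.Ico (a+1) b → V = A ∨ ∀ x ∈ V, b < x := by
      intro V hV hVn
      by_cases hVA : V = A
      · exact Or.inl hVA
      right
      obtain ⟨y, hy, hy'⟩ := Finset.not_subset.1 hVn
      have nota : ∀ x ∈ V, x ≠ a ∧ x ≠ b := fun x hx =>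
        ⟨fun h => hVA (h3 V hV A hA a (h ▸ hx) haA), fun h => hVA (h3 V hV A hA b (h ▸ hx) hbA)⟩
      have hy0 := h0' V hV y hy
      have hyn := nota y hy
      have hyb : b < y := by
        simp only [Finset.mem_Ico] at hy'; omega
      intro x hx
      by_contra hxb
      have hx0 := h0' V hV x hx
      have hxn := nota x hx
      exact hVA (h4 A hA V hV a haA b hbA x hx y hy (by omega) (by omega) hyb).symm
    have key2 : ∀ V ∈ π, ¬ V ⊆ Finset.Ico (a+1) b → ∀ x ∈ V.erase a, b ≤ x := by
      intro V hV hVn x hx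
      rcases key V hV hVn with rfl | h
      · rcases hAx x (mem_of_mem_erase hx) with h | h
        · exact absurd h (ne_of_mem_erase hx)
        · exact h
      · exact (h x (mem_of_mem_erase hx)).le
    rw [mem_product, mem_NCS, mem_NCS]
    refine ⟨⟨?_, ?_, ?_, ?_, ?_⟩, ⟨?_, ?_, ?_, ?_, ?_⟩⟩
    · exact fun V hV => (mem_filter.1 hV).2
    · exact fun V hV => h1 V (mem_filter.1 hV).1
    · intro x hx
      simp only [Finset.mem_Ico] at hx
      obtain ⟨V, hV, hxV⟩ := h2 x (by simp only [Finset.mem_Ico]; omega)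
      refine ⟨V, mem_filter.2 ⟨hV, ?_⟩, hxV⟩
      by_contra hVn
      have := key2 V hV hVn x (mem_erase.2 ⟨by omega, hxV⟩)
      omega
    · exact fun V hV W hW => h3 V (mem_filter.1 hV).1 W (mem_filter.1 hW).1
    · exact fun V hV W hW => h4 V (mem_filter.1 hV).1 W (mem_filter.1 hW).1
    · intro W hW x hx
      obtain ⟨V, hV, rfl⟩ := mem_image.1 hW
      obtain ⟨hV, hVn⟩ := mem_filter.1 hV
      have q1 := key2 V hV hVn x hx
      have q2 := h0' V hV x (mem_of_mem_erase hx)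
      simp only [Finset.mem_Ico]; omega
    · intro W hW
      obtain ⟨V, hV, rfl⟩ := mem_image.1 hW
      obtain ⟨hV, hVn⟩ := mem_filter.1 hV
      rcases key V hV hVn with rfl | h
      · exact ⟨b, mem_erase.2 ⟨by omega, hbA⟩⟩
      · obtain ⟨x, hx⟩ := h1 V hV
        have := h x hx
        exact ⟨x, mem_erase.2 ⟨by omega, hx⟩⟩
    · intro x hx
      simp only [Finset.mem_Ico] at hx
      obtain ⟨V, hV, hxV⟩ := h2 x (by simp only [Finset.mem_Ico]; omega)
      refine ⟨V.erase a, mem_image_of_mem _ (mem_filter.2 ⟨hV, ?_⟩), mem_erase.2 ⟨by omega, hxV⟩⟩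
      intro h
      have := h hxV
      simp at this; omega
    · intro W hW W' hW' x hx hx'
      obtain ⟨V, hV, rfl⟩ := mem_image.1 hW
      obtain ⟨V', hV', rfl⟩ := mem_image.1 hW'
      rw [h3 V (mem_filter.1 hV).1 V' (mem_filter.1 hV').1 x (mem_of_mem_erase hx)
        (mem_of_mem_erase hx')]
    · intro W hW W' hW' x₁ hx₁ y₁ hy₁ x₂ hx₂ y₂ hy₂ l1 l2 l3
      obtain ⟨V, hV, rfl⟩ := mem_image.1 hW
      obtain ⟨V', hV', rfl⟩ := mem_image.1 hW'
      rw [h4 V (mem_filter.1 hV).1 V' (mem_filter.1 hV').1 x₁ (mem_of_mem_erase hx₁)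
        y₁ (mem_of_mem_erase hy₁) x₂ (mem_of_mem_erase hx₂) y₂ (mem_of_mem_erase hy₂) l1 l2 l3]
  · rintro ⟨σ, τ⟩ h
    rw [mem_product, mem_NCS, mem_NCS] at h
    obtain ⟨⟨h0, h1, -⟩, ⟨g0, g1, -⟩⟩ := h
    simp only at h0 h1 g0 g1
    have g2 : ∀ V ∈ τ, ¬ addB a b V ⊆ Finset.Ico (a+1) b := by
      intro V hV hs
      obtain ⟨x, hx⟩ := g1 V hV
      have q1 := g0 V hV hx
      have q2 : x ∈ addB a b V := by unfold addB; split_ifs <;> simp [hx]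
      have q3 := hs q2
      simp at q1 q3; omega
    have g3 : ∀ V ∈ τ, (addB a b V).erase a = V := by
      intro V hV
      have : a ∉ V := fun h => by
        have := g0 V hV h; simp at this; omega
      unfold addB
      split_ifs
      · exact erase_insert this
      · exact erase_eq_of_notMem this
    refine Prod.ext ?_ ?_
    · ext V
      simp only [mem_filter, mem_union, mem_image]
      constructor
      · rintro ⟨h | ⟨W, hW, rfl⟩, hs⟩
        · exact h
        · exact absurd hs (g2 W hW)
      · exact fun h => ⟨Or.inl h, h0 V h⟩
    · ext V
      simp only [mem_filter, mem_union, mem_image]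
      constructor
      · rintro ⟨W, ⟨h | ⟨W, hW, rfl⟩, hs⟩, rfl⟩
        · exact absurd (h0 W h) hs
        · rw [g3 W hW]; exact hW
      · exact fun h => ⟨addB a b V, ⟨Or.inr ⟨V, h, rfl⟩, g2 V h⟩, g3 V h⟩
  · intro π hπ
    rw [mem_filter, mem_NCS] at hπ
    obtain ⟨⟨h0, h1, h2, h3, h4⟩, A, hA, haA, hbA, -, hAx⟩ := hπ
    have g3 : ∀ V ∈ π, addB a b (V.erase a) = V := by
      intro V hV
      unfold addB
      split_ifs with hb
      · have : V = A := h3 V hV A hA b (mem_of_mem_erase hb) hbA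
        rw [this]; exact insert_erase haA
      · refine erase_eq_of_notMem fun ha => hb ?_
        have : V = A := h3 V hV A hA a ha haA
        rw [this]; exact mem_erase.2 ⟨by omega, hbA⟩
    ext V
    simp only [mem_filter, mem_union, mem_image]
    constructor
    · rintro (h | ⟨W, ⟨W', h, rfl⟩, rfl⟩)
      · exact h.1
      · rw [g3 W' h.1]; exact h.1
    · intro h
      by_cases hs : V ⊆ Finset.Ico (a+1) b
      · exact Or.inl ⟨h, hs⟩
      · exact Or.inr ⟨V.erase a, ⟨V, ⟨h, hs⟩, rfl⟩, g3 V h⟩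
  · rintro ⟨σ, τ⟩ h
    rw [mem_product, mem_NCS, mem_NCS] at h
    obtain ⟨⟨h0, h1, -⟩, ⟨g0, g1, -⟩⟩ := h
    simp only at h0 h1 g0 g1
    have ga : ∀ V ∈ τ, a ∉ V := fun V hV h => by
      have := g0 V hV h; simp at this; omega
    have ha : ∀ V ∈ σ, a ∉ V := fun V hV h => by
      have := h0 V hV h; simp at this
    have g3 : ∀ V ∈ τ, (addB a b V).erase a = V := by
      intro V hV
      have := ga V hV
      unfold addB
      split_ifs
      · exact erase_insert this
      · exact erase_eq_of_notMem this
    rw [Finset.prod_union, Finset.prod_image]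
    · congr 1
      · refine Finset.prod_congr rfl fun V hV => ?_
        simp [ha V hV]
      · refine Finset.prod_congr rfl fun V hV => ?_
        have := ga V hV
        unfold addB
        split_ifs with q1 q2 q3
        · rw [card_insert_of_notMem this]
          congr 1; omega
        · simp at q2
        · rfl
    · intro V hV W hW hVW
      rw [← g3 V hV, ← g3 W hW]
      exact congrArg (fun X => X.erase a) hVW
    · rw [Finset.disjoint_left]
      intro V hV hV'
      obtain ⟨W, hW, rfl⟩ := mem_image.1 hV'
      obtain ⟨x, hx⟩ := g1 W hW
      have q1 := g0 W hW hx
      have q2 : x ∈ addB a b W := by unfold addB; split_ifs <;> simp [hx]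
      have q3 := h0 _ hV q2
      simp at q1 q3; omega

lemma ncU_rec (k : ℕ → ℝ) (s a e : ℕ) (hae : a < e) :
    ncU k s a (Finset.Ico a e) = k (s + 1) * ncU k 0 0 (Finset.Ico (a + 1) e) +
      ∑ b ∈ Finset.Ico (a + 1) e,
        ncU k 0 0 (Finset.Ico (a + 1) b) * ncU k (s + 1) b (Finset.Ico b e) := by
  classical
  rw [← part_single k s a e hae, ncU,
    ← Finset.sum_filter_add_sum_filter_not (NCS (Finset.Ico a e)) (fun π => {a} ∈ π)]
  congr 1
  have : ∀ b ∈ Finset.Ico (a + 1) e,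
      ncU k 0 0 (Finset.Ico (a + 1) b) * ncU k (s + 1) b (Finset.Ico b e) =
      ∑ π ∈ (NCS (Finset.Ico a e)).filter (Sec a b),
        ∏ V ∈ π, k (V.card + if a ∈ V then s else 0) := by
    intro b hb
    rw [Finset.mem_Ico] at hb
    rw [part_sec k s a b e (by omega) (by omega)]
  rw [Finset.sum_congr rfl this, ← Finset.sum_biUnion]
  · refine Finset.sum_congr ?_ fun _ _ => rfl
    ext π
    simp only [mem_filter, mem_biUnion]
    constructor
    · rintro ⟨hπ, hs⟩
      have hπ' := mem_NCS.1 hπ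
      obtain ⟨A, hA, haA⟩ := hπ'.2.2.1 a (by simp [hae])
      have hne : (A.erase a).Nonempty := by
        rw [Finset.nonempty_iff_ne_empty]
        intro h
        rw [Finset.erase_eq_empty_iff] at h
        rcases h with rfl | rfl
        · simp at haA
        · exact hs hA
      have hmem := Finset.min'_mem _ hne
      have hS := hπ'.1 A hA (mem_of_mem_erase hmem)
      have hn := ne_of_mem_erase hmem
      rw [Finset.mem_Ico] at hS
      refine ⟨(A.erase a).min' hne, by rw [Finset.mem_Ico]; omega, hπ, A, hA, haA,
        mem_of_mem_erase hmem, by omega, fun x hx => ?_⟩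
      by_cases hxa : x = a
      · exact Or.inl hxa
      · exact Or.inr (Finset.min'_le _ _ (mem_erase.2 ⟨hxa, hx⟩))
    · rintro ⟨b, hb, hπ, A, hA, haA, hbA, hab, -⟩
      refine ⟨hπ, fun hs => ?_⟩
      have := (mem_NCS.1 hπ).2.2.2.1 A hA _ hs a haA (by simp)
      rw [this] at hbA
      simp at hbA; omega
  · intro b hb c hc hbc
    refine Finset.disjoint_left.2 fun π h1 h2 => hbc ?_
    obtain ⟨hπ, A, hA, haA, hbA, hab, hmin⟩ := mem_filter.1 h1
    obtain ⟨-, B, hB, haB, hcB, hac, hmin'⟩ := mem_filter.1 h2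
    have := (mem_NCS.1 hπ).2.2.2.1 A hA B hB a haA haB
    subst this
    rcases hmin c hcB with h | h <;> rcases hmin' b hbA with h' | h' <;> omega

/-- The weighted sum only depends on the length of the interval. -/
def uu (k : ℕ → ℝ) (s n : ℕ) : ℝ := ncU k s 1 (Finset.Ico 1 (1 + n))

lemma ncU_shift (k : ℕ → ℝ) (n : ℕ) : ∀ s a, ncU k s a (Finset.Ico a (a + n)) = uu k s n := by
  induction n using Nat.strong_induction_on with
  | _ n ih =>
    intro s a
    rcases n with _ | n
    · simp [uu, ncU_empty]
    have h : ∀ c, ncU k s c (Finset.Ico c (c + (n + 1))) = k (s + 1) * uu k 0 n +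
        ∑ j ∈ Finset.range n, uu k 0 j * uu k (s + 1) (n - j) := by
      intro c
      rw [ncU_rec k s c _ (by omega)]
      congr 1
      · rw [ncU_zero k 0 (c + 1), show c + (n + 1) = c + 1 + n by ring, ih n (by omega)]
      · rw [Finset.sum_Ico_eq_sum_range, show c + (n + 1) - (c + 1) = n by omega]
        refine Finset.sum_congr rfl fun j hj => ?_
        rw [Finset.mem_range] at hj
        rw [ncU_zero k 0 (c + 1), ih j (by omega),
          show c + (n + 1) = c + 1 + j + (n - j) by omega, ih (n - j) (by omega)]
    rw [uu, h, h]

lemma uu_rec (k : ℕ → ℝ) (s n : ℕ) : uu k s (n + 1) = k (s + 1) * uu k 0 n +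
    ∑ j ∈ Finset.range n, uu k 0 j * uu k (s + 1) (n - j) := by
  rw [uu, ncU_rec k s 1 _ (by omega)]
  congr 1
  · rw [ncU_zero k 0 (1 + 1), show 1 + (n + 1) = 1 + 1 + n by ring, ncU_shift]
  · rw [Finset.sum_Ico_eq_sum_range, show 1 + (n + 1) - (1 + 1) = n by omega]
    refine Finset.sum_congr rfl fun j hj => ?_
    rw [Finset.mem_range] at hj
    rw [ncU_zero k 0 (1 + 1), ncU_shift,
      show 1 + (n + 1) = 1 + 1 + j + (n - j) by omega, ncU_shift]

lemma uu_zero (k : ℕ → ℝ) (s : ℕ) : uu k s 0 = 1 := by simp [uu, ncU_empty]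

lemma uu_nonneg (k : ℕ → ℝ) (hk : ∀ j, 1 ≤ j → 0 < k j) (s n : ℕ) : 0 ≤ uu k s n :=
  ncU_nonneg k hk _ _ _

lemma moment_eq (k : ℕ → ℝ) (n : ℕ) :
    ∑ π ∈ NCP n, ∏ V ∈ π, k V.card = uu k 0 n := by
  rw [NCP_eq, uu, ncU, show Finset.Icc 1 n = Finset.Ico 1 (1 + n) by ext; simp; omega]
  simp

lemma trunc_step (k : ℕ → ℝ) (hk : ∀ j, 1 ≤ j → 0 < k j) (z : ℝ) (hz : 0 ≤ z) (s n : ℕ) :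
    ∑ i ∈ Finset.range (n + 1), uu k s (i + 1) * z ^ i ≤
      k (s + 1) * ∑ i ∈ Finset.range (n + 1), uu k 0 i * z ^ i +
      z * ((∑ i ∈ Finset.range (n + 1), uu k 0 i * z ^ i) *
        ∑ i ∈ Finset.range n, uu k (s + 1) (i + 1) * z ^ i) := by
  have e1 : ∑ i ∈ Finset.range (n + 1), uu k s (i + 1) * z ^ i =
      k (s + 1) * ∑ i ∈ Finset.range (n + 1), uu k 0 i * z ^ i +
      ∑ i ∈ Finset.range (n + 1), (∑ j ∈ Finset.range i, uu k 0 j * uu k (s + 1) (i - j)) * z ^ i := by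
    rw [Finset.mul_sum, ← Finset.sum_add_distrib]
    refine Finset.sum_congr rfl fun i _ => ?_
    rw [uu_rec]; ring
  rw [e1]
  gcongr
  rw [Finset.sum_range_succ']
  simp only [Finset.range_zero, Finset.sum_empty, zero_mul, add_zero]
  have e2 : ∑ i ∈ Finset.range n,
      (∑ j ∈ Finset.range (i + 1), uu k 0 j * uu k (s + 1) (i + 1 - j)) * z ^ (i + 1) =
      z * ∑ i ∈ Finset.range n, ∑ j ∈ Finset.range (i + 1),
        (fun a b => (uu k 0 a * z ^ a) * (uu k (s + 1) (b + 1) * z ^ b)) j (i - j) := by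
    rw [Finset.mul_sum]
    refine Finset.sum_congr rfl fun i _ => ?_
    rw [Finset.sum_mul, Finset.mul_sum]
    refine Finset.sum_congr rfl fun j hj => ?_
    rw [Finset.mem_range] at hj
    obtain ⟨l, rfl⟩ : ∃ l, i = j + l := ⟨i - j, by omega⟩
    rw [show j + l + 1 - j = l + 1 by omega, show j + l - j = l by omega]
    ring
  rw [e2, Finset.sum_range_diag_flip n
    (fun a b => (uu k 0 a * z ^ a) * (uu k (s + 1) (b + 1) * z ^ b))]
  gcongr
  have nn : ∀ s i, 0 ≤ uu k s i * z ^ (i - 1) := fun s i =>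
    mul_nonneg (uu_nonneg k hk _ _) (pow_nonneg hz _)
  rw [Finset.sum_mul]
  calc _ ≤ ∑ m ∈ Finset.range n, uu k 0 m * z ^ m * ∑ i ∈ Finset.range n, uu k (s + 1) (i + 1) * z ^ i := by
        refine Finset.sum_le_sum fun m _ => ?_
        rw [← Finset.mul_sum]
        refine mul_le_mul_of_nonneg_left ?_ (mul_nonneg (uu_nonneg k hk _ _) (pow_nonneg hz _))
        refine Finset.sum_le_sum_of_subset_of_nonneg ?_ fun i _ _ =>
          mul_nonneg (uu_nonneg k hk _ _) (pow_nonneg hz _)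
        intro x; simp only [Finset.mem_range]; omega
    _ ≤ _ := by
        refine Finset.sum_le_sum_of_subset_of_nonneg ?_ fun i _ _ =>
          mul_nonneg (mul_nonneg (uu_nonneg k hk _ _) (pow_nonneg hz _))
            (Finset.sum_nonneg fun i _ => mul_nonneg (uu_nonneg k hk _ _) (pow_nonneg hz _))
        intro x; simp only [Finset.mem_range]; omega

lemma trunc_bound (k : ℕ → ℝ) (hk : ∀ j, 1 ≤ j → 0 < k j) (z : ℝ) (hz : 0 ≤ z) (Y : ℝ) (n : ℕ) :
    ∀ s, ∑ i ∈ Finset.range n, uu k 0 i * z ^ i ≤ Y →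
    ∑ i ∈ Finset.range n, uu k s (i + 1) * z ^ i ≤
      ∑ t ∈ Finset.range n, k (s + t + 1) * z ^ t * Y ^ (t + 1) := by
  have nn : ∀ s i j, 0 ≤ uu k s i * z ^ j := fun s i j =>
    mul_nonneg (uu_nonneg k hk _ _) (pow_nonneg hz _)
  induction n with
  | zero => intro s _; simp
  | succ n ih =>
    intro s hY
    have hY' : ∑ i ∈ Finset.range n, uu k 0 i * z ^ i ≤ Y := by
      rw [Finset.sum_range_succ] at hY
      linarith [nn 0 n n]
    have hY0 : 0 ≤ Y := le_trans (Finset.sum_nonneg fun i _ => nn _ _ _) hY'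
    refine (trunc_step k hk z hz s n).trans ?_
    have h1 := ih (s + 1) hY'
    have hks := hk (s + 1) (by omega)
    calc _ ≤ k (s + 1) * Y + z * (Y *
          ∑ t ∈ Finset.range n, k (s + 1 + t + 1) * z ^ t * Y ^ (t + 1)) := by
          gcongr
          exact Finset.sum_nonneg fun i _ => nn _ _ _
      _ = _ := by
          rw [Finset.sum_range_succ', Finset.mul_sum, Finset.mul_sum, add_comm]
          congr 1
          · refine Finset.sum_congr rfl fun t _ => ?_
            rw [show s + 1 + t + 1 = s + (t + 1) + 1 by ring]; ring
          · simp

lemma moment_bound (k : ℕ → ℝ) (hk : ∀ j, 1 ≤ j → 0 < k j) (z : ℝ) (hz : 0 ≤ z) (X : ℝ)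
    (hX0 : 0 ≤ X)
    (hX : ∀ N, 1 + ∑ t ∈ Finset.range N, k (t + 1) * (z * X) ^ (t + 1) ≤ X) (n : ℕ) :
    ∑ i ∈ Finset.range n, uu k 0 i * z ^ i ≤ X := by
  induction n with
  | zero => simpa using hX0
  | succ n ih =>
    rw [Finset.sum_range_succ', uu_zero]
    have h1 := trunc_bound k hk z hz X n 0 ih
    have h2 : ∑ i ∈ Finset.range n, uu k 0 (i + 1) * z ^ (i + 1) =
        z * ∑ i ∈ Finset.range n, uu k 0 (i + 1) * z ^ i := by
      rw [Finset.mul_sum]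
      exact Finset.sum_congr rfl fun i _ => by ring
    have h3 : ∑ t ∈ Finset.range n, k (t + 1) * (z * X) ^ (t + 1) =
        z * ∑ t ∈ Finset.range n, k (0 + t + 1) * z ^ t * X ^ (t + 1) := by
      rw [Finset.mul_sum]
      exact Finset.sum_congr rfl fun i _ => by rw [zero_add]; ring
    have h4 := hX n
    have h5 := mul_le_mul_of_nonneg_left h1 hz
    rw [h2]; linarith

lemma summable_uu (k : ℕ → ℝ) (hk : ∀ j, 1 ≤ j → 0 < k j) (z : ℝ) (hz : 0 < z)
    (hs : Summable fun i => uu k 0 i * z ^ i) (s : ℕ) :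
    Summable fun i => uu k s (i + 1) * z ^ i := by
  induction s with
  | zero =>
    have := ((summable_nat_add_iff 1).2 hs).mul_left z⁻¹
    refine this.congr fun i => ?_
    field_simp; ring
  | succ s ih =>
    have := ((summable_nat_add_iff 1).2 ih).mul_left z⁻¹
    refine Summable.of_nonneg_of_le
      (fun i => mul_nonneg (uu_nonneg k hk _ _) (pow_nonneg hz.le _)) (fun i => ?_) this
    have h1 : uu k (s + 1) (i + 1) ≤ uu k s (i + 1 + 1) := by
      rw [uu_rec k s (i + 1), Finset.sum_range_succ']
      have q1 := mul_nonneg (hk (s + 1) (by omega)).le (uu_nonneg k hk 0 (i + 1))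
      have q2 : 0 ≤ ∑ j ∈ Finset.range i, uu k 0 (j + 1) * uu k (s + 1) (i + 1 - (j + 1)) :=
        Finset.sum_nonneg fun j _ => mul_nonneg (uu_nonneg k hk _ _) (uu_nonneg k hk _ _)
      rw [uu_zero, Nat.sub_zero, one_mul]
      linarith
    calc _ ≤ uu k s (i + 1 + 1) * z ^ i := by gcongr
      _ = _ := by field_simp; ring

lemma tsum_step (k : ℕ → ℝ) (hk : ∀ j, 1 ≤ j → 0 < k j) (z : ℝ) (hz : 0 < z)
    (hs : Summable fun i => uu k 0 i * z ^ i) (s : ℕ) :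
    ∑' i, uu k s (i + 1) * z ^ i = k (s + 1) * ∑' i, uu k 0 i * z ^ i +
      z * ((∑' i, uu k 0 i * z ^ i) * ∑' i, uu k (s + 1) (i + 1) * z ^ i) := by
  have hs1 := summable_uu k hk z hz hs (s + 1)
  have h0 := summable_uu k hk z hz hs s
  set B : ℕ → ℝ := fun i => (∑ j ∈ Finset.range i, uu k 0 j * uu k (s + 1) (i - j)) * z ^ i with hB
  have e1 : ∀ i, uu k s (i + 1) * z ^ i = k (s + 1) * (uu k 0 i * z ^ i) + B i := by
    intro i; rw [uu_rec, hB]; ring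
  have hBs : Summable B := by
    refine (h0.sub (hs.mul_left (k (s + 1)))).congr fun i => ?_
    rw [e1]; ring
  rw [tsum_congr e1, (hs.mul_left _).tsum_add hBs, tsum_mul_left]
  congr 1
  rw [hBs.tsum_eq_zero_add, tsum_mul_tsum_eq_tsum_sum_range_of_summable_norm hs.norm hs1.norm,
    ← tsum_mul_left]
  simp only [hB, Finset.range_zero, Finset.sum_empty, zero_mul, zero_add]
  refine tsum_congr fun i => ?_
  rw [Finset.sum_mul, Finset.mul_sum]
  refine Finset.sum_congr rfl fun j hj => ?_
  rw [Finset.mem_range] at hj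
  obtain ⟨l, rfl⟩ : ∃ l, i = j + l := ⟨i - j, by omega⟩
  rw [show j + l + 1 - j = l + 1 by omega, show j + l - j = l by omega]
  ring

lemma tsum_lower (k : ℕ → ℝ) (hk : ∀ j, 1 ≤ j → 0 < k j) (z : ℝ) (hz : 0 < z)
    (hs : Summable fun i => uu k 0 i * z ^ i) (N : ℕ) : ∀ s,
    ∑ t ∈ Finset.range N, k (s + t + 1) * z ^ t * (∑' i, uu k 0 i * z ^ i) ^ (t + 1) ≤
    ∑' i, uu k s (i + 1) * z ^ i := by
  have nn : ∀ s i j, 0 ≤ uu k s i * z ^ j := fun s i j =>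
    mul_nonneg (uu_nonneg k hk _ _) (pow_nonneg hz.le _)
  have hM : 0 ≤ ∑' i, uu k 0 i * z ^ i := tsum_nonneg fun i => nn _ _ _
  induction N with
  | zero => intro s; simpa using tsum_nonneg fun i => nn _ _ _
  | succ N ih =>
    intro s
    rw [tsum_step k hk z hz hs s, Finset.sum_range_succ', add_comm]
    refine add_le_add (by simp) ?_
    refine le_trans (le_of_eq ?_)
      (mul_le_mul_of_nonneg_left (mul_le_mul_of_nonneg_left (ih (s + 1)) hM) hz.le)
    rw [Finset.mul_sum, Finset.mul_sum]
    refine Finset.sum_congr rfl fun t _ => ?_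
    rw [show s + 1 + t + 1 = s + (t + 1) + 1 by ring]; ring

/-- `C(zM(z)) ≤ M(z)`. -/
lemma cumulant_bound (k : ℕ → ℝ) (hk : ∀ j, 1 ≤ j → 0 < k j) (z : ℝ) (hz : 0 < z)
    (hs : Summable fun i => uu k 0 i * z ^ i) (N : ℕ) :
    ∑ t ∈ Finset.range N, k (t + 1) * (z * ∑' i, uu k 0 i * z ^ i) ^ (t + 1) ≤
      ∑' i, uu k 0 i * z ^ i - 1 := by
  have h1 := mul_le_mul_of_nonneg_left (tsum_lower k hk z hz hs N 0) hz.le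
  have h2 : ∑' i, uu k 0 i * z ^ i - 1 = z * ∑' i, uu k 0 (i + 1) * z ^ i := by
    rw [hs.tsum_eq_zero_add, uu_zero, ← tsum_mul_left]
    rw [pow_zero, mul_one, add_sub_cancel_left]
    exact tsum_congr fun i => by ring
  rw [h2]
  refine le_trans (le_of_eq ?_) h1
  rw [Finset.mul_sum]
  exact Finset.sum_congr rfl fun i _ => by rw [zero_add]; ring

/-- The variational upper bound. -/
lemma var_upper (k : ℕ → ℝ) (hk : ∀ j, 1 ≤ j → 0 < k j) (w x : ℝ) (hw : 0 < w) (hx : 0 < x)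
    (hC : ∀ N, ∑ t ∈ Finset.range N, k (t + 1) * w ^ (t + 1) ≤ x)
    (p : ℕ → ℝ) (hp : ∀ n, 0 ≤ p n) (hp0 : p 0 = 0) (hp1 : HasSum p 1)
    (hm : Summable (fun n : ℕ => (n : ℝ) * p n))
    (hl : Summable (fun n : ℕ => p n * Real.log (k n / p n))) :
    (∑' n : ℕ, (n : ℝ) * p n)⁻¹ * (∑' n : ℕ, p n * Real.log (k n / p n))
      + Theta (∑' n : ℕ, (n : ℝ) * p n) / (∑' n : ℕ, (n : ℝ) * p n) ≤
    Real.log ((1 + x) / w) := by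
  set m := ∑' n : ℕ, (n : ℝ) * p n with hmdef
  set L := ∑' n : ℕ, p n * Real.log (k n / p n) with hLdef
  have hm1 : 1 ≤ m := by
    rw [← hp1.tsum_eq]
    refine hp1.summable.tsum_le_tsum (fun n => ?_) hm
    rcases n with _ | n
    · simp [hp0]
    · have := hp (n + 1)
      push_cast
      nlinarith [(Nat.cast_nonneg n : (0:ℝ) ≤ n)]
  have hm0 : 0 < m := by linarith
  let g : ℕ → ℝ := fun n => if n = 0 then 0 else k n * w ^ n
  have hg0 : ∀ n, 0 ≤ g n := by
    intro n
    by_cases h : n = 0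
    · simp [g, h]
    · simp only [g, h, if_false]
      exact mul_nonneg (hk n (by omega)).le (by positivity)
  have hgN : ∀ N, ∑ n ∈ Finset.range N, g n ≤ x := by
    intro N
    rcases N with _ | N
    · simpa using hx.le
    · rw [Finset.sum_range_succ']
      simpa [g] using hC N
  have hgs : Summable g := summable_of_sum_range_le hg0 hgN
  have hgx : ∑' n, g n ≤ x := hgs.tsum_le_of_sum_range_le hgN
  have hpt : ∀ n, p n * Real.log (k n / p n) + Real.log w * (n * p n) - Real.log x * p n ≤
      x⁻¹ * g n - p n := by
    intro n
    rcases (hp n).eq_or_lt with h | h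
    · rw [← h]; simp
      exact mul_nonneg (by positivity) (hg0 n)
    · have hn : n ≠ 0 := by rintro rfl; linarith
      have hkn := hk n (by omega)
      have e : Real.log (k n * w ^ n / (p n * x)) =
          Real.log (k n / p n) + n * Real.log w - Real.log x := by
        rw [Real.log_div (by positivity) (by positivity), Real.log_mul (by positivity) (by positivity),
          Real.log_mul (by positivity) (by positivity), Real.log_div (by positivity) (by positivity),
          Real.log_pow]
        ring
      have h2 := mul_le_mul_of_nonneg_left
        (Real.log_le_sub_one_of_pos (x := k n * w ^ n / (p n * x)) (by positivity)) h.le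
      rw [e] at h2
      simp only [g, hn, if_false]
      have e3 : p n * (k n * w ^ n / (p n * x) - 1) = x⁻¹ * (k n * w ^ n) - p n := by
        field_simp
      rw [e3] at h2
      linarith
  have hsum : L + Real.log w * m - Real.log x * 1 ≤ x⁻¹ * ∑' n, g n - 1 := by
    have a1 : HasSum (fun n => p n * Real.log (k n / p n) + Real.log w * (n * p n) - Real.log x * p n)
        (L + Real.log w * m - Real.log x * 1) :=
      (hl.hasSum.add (hm.hasSum.mul_left _)).sub (hp1.mul_left _)
    have a2 : HasSum (fun n => x⁻¹ * g n - p n) (x⁻¹ * ∑' n, g n - 1) :=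
      (hgs.hasSum.mul_left _).sub hp1
    exact hasSum_le hpt a1 a2
  have hx1 : x⁻¹ * ∑' n, g n ≤ 1 := by
    calc _ ≤ x⁻¹ * x := by gcongr
      _ = 1 := by field_simp
  have hT : Real.log x + Theta m ≤ m * Real.log (1 + x) := by
    rcases hm1.eq_or_lt with h | h
    · rw [← h]; simp [Theta]
      exact Real.log_le_log hx (by linarith)
    · have hm' : 0 < m - 1 := by linarith
      have b1 := Real.log_le_sub_one_of_pos (x := m * x / (1 + x)) (by positivity)
      have b2 := mul_le_mul_of_nonneg_left
        (Real.log_le_sub_one_of_pos (x := m / ((m - 1) * (1 + x))) (by positivity)) hm'.le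
      have e1 : m * x / (1 + x) - 1 + (m - 1) * (m / ((m - 1) * (1 + x)) - 1) = 0 := by
        field_simp; ring
      rw [Real.log_div (by positivity) (by positivity), Real.log_mul (by positivity) (by positivity)] at b1
      rw [Real.log_div (by positivity) (by positivity), Real.log_mul (by positivity) (by positivity)] at b2
      have e2 : Real.log (1 - m⁻¹) = Real.log (m - 1) - Real.log m := by
        rw [← Real.log_div (by positivity) (by positivity)]
        congr 1; field_simp
      rw [Theta, e2]
      nlinarith
  rw [Real.log_div (by positivity) (by positivity)]
  have : m⁻¹ * L + Theta m / m = (L + Theta m) / m := by field_simp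
  rw [this, div_le_iff₀ hm0]
  nlinarith

/-- The truncated optimiser. -/
lemma var_opt (k : ℕ → ℝ) (hk : ∀ j, 1 ≤ j → 0 < k j) (N : ℕ) :
    ∃ w : ℝ, 0 < w ∧ ∃ p : ℕ → ℝ, (∀ n, 0 ≤ p n) ∧ p 0 = 0 ∧ HasSum p 1 ∧
        Summable (fun n : ℕ => (n : ℝ) * p n) ∧
        Summable (fun n : ℕ => p n * Real.log (k n / p n)) ∧
        Real.log ((1 + ∑ t ∈ Finset.range (N + 2), k (t + 1) * w ^ (t + 1)) / w) =
          (∑' n : ℕ, (n : ℝ) * p n)⁻¹ * (∑' n : ℕ, p n * Real.log (k n / p n))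
            + Theta (∑' n : ℕ, (n : ℝ) * p n) / (∑' n : ℕ, (n : ℝ) * p n) := by
  let G : ℝ → ℝ := fun w => ∑ t ∈ Finset.range (N + 2), t * (k (t + 1) * w ^ (t + 1))
  have hk' : ∀ t, 0 < k (t + 1) := fun t => hk _ (by omega)
  have hGc : Continuous G := by fun_prop
  have hG0 : G 0 = 0 := by simp [G]
  set W : ℝ := 1 + 1 / k 2 with hW
  have hk2 : 0 < k 2 := hk 2 (by norm_num)
  have hW1 : 1 ≤ W := by rw [hW]; have : 0 < 1 / k 2 := by positivity
                         linarith
  have hGW : 1 ≤ G W := by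
    have h1 : (1 : ℕ) * (k (1 + 1) * W ^ (1 + 1)) ≤ G W :=
      Finset.single_le_sum (f := fun t : ℕ => (t : ℝ) * (k (t + 1) * W ^ (t + 1)))
        (fun t _ => by have := hk' t; positivity) (by simp)
    refine le_trans ?_ h1
    have : k 2 * W = k 2 + 1 := by rw [hW]; field_simp
    norm_num
    nlinarith
  obtain ⟨w, ⟨hw0, -⟩, hGw⟩ := intermediate_value_Icc (by linarith : (0:ℝ) ≤ W) hGc.continuousOn
    (show (1 : ℝ) ∈ Set.Icc (G 0) (G W) from ⟨by rw [hG0]; norm_num, hGW⟩)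
  have hw : 0 < w := by
    rcases hw0.eq_or_lt with h | h
    · rw [← h, hG0] at hGw; norm_num at hGw
    · exact h
  refine ⟨w, hw, ?_⟩
  set x := ∑ t ∈ Finset.range (N + 2), k (t + 1) * w ^ (t + 1) with hx
  have hx0 : 0 < x := Finset.sum_pos (fun t _ => by have := hk' t; positivity) ⟨0, by simp⟩
  let p : ℕ → ℝ := fun n => if n ∈ Finset.Ico 1 (N + 3) then k n * w ^ n / x else 0
  have hpsupp : ∀ n, n ∉ Finset.Ico 1 (N + 3) → p n = 0 := fun n hn => if_neg hn
  have key : ∀ f : ℕ → ℝ, ∑ n ∈ Finset.Ico 1 (N + 3), f n = ∑ t ∈ Finset.range (N + 2), f (t + 1) := by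
    intro f
    rw [Finset.sum_Ico_eq_sum_range]
    exact Finset.sum_congr rfl fun t _ => by rw [add_comm]
  have pin : ∀ n ∈ Finset.Ico 1 (N + 3), p n = k n * w ^ n / x := fun n hn => if_pos hn
  have s1 : HasSum p 1 := by
    have : HasSum p (∑ n ∈ Finset.Ico 1 (N + 3), p n) := hasSum_sum_of_ne_finset_zero hpsupp
    convert this using 1
    rw [Finset.sum_congr rfl pin, key, ← Finset.sum_div, ← hx]
    field_simp
  have s2 : HasSum (fun n : ℕ => (n : ℝ) * p n) ((1 + x) / x) := by
    have : HasSum (fun n : ℕ => (n : ℝ) * p n) (∑ n ∈ Finset.Ico 1 (N + 3), (n : ℝ) * p n) :=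
      hasSum_sum_of_ne_finset_zero (fun n hn => by rw [hpsupp n hn, mul_zero])
    convert this using 1
    rw [Finset.sum_congr rfl (fun n hn => by rw [pin n hn]), key, ← hGw, hx, ← Finset.sum_add_distrib,
      Finset.sum_div]
    exact Finset.sum_congr rfl fun t _ => by push_cast; ring
  have s3 : HasSum (fun n : ℕ => p n * Real.log (k n / p n))
      (Real.log x - Real.log w * ((1 + x) / x)) := by
    have hterm : ∀ n : ℕ, p n * Real.log (k n / p n) =
        Real.log x * p n - Real.log w * ((n : ℝ) * p n) := by
      intro n
      by_cases hn : n ∈ Finset.Ico 1 (N + 3)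
      · have hkn := hk n (Finset.mem_Ico.1 hn).1
        rw [pin n hn]
        have : k n / (k n * w ^ n / x) = x / w ^ n := by field_simp
        rw [this, Real.log_div (by positivity) (by positivity), Real.log_pow]
        ring
      · simp [hpsupp n hn]
    have h := (s1.mul_left (Real.log x)).sub (s2.mul_left (Real.log w))
    rw [mul_one] at h
    have hfe : (fun n : ℕ => p n * Real.log (k n / p n)) =
        fun b : ℕ => Real.log x * p b - Real.log w * ((b : ℝ) * p b) := by
      funext n
      exact hterm n
    rw [hfe]
    exact h
  refine ⟨p, ?_, ?_, s1, s2.summable, s3.summable, ?_⟩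
  · intro n
    by_cases hn : n ∈ Finset.Ico 1 (N + 3)
    · have hkn := hk n (Finset.mem_Ico.1 hn).1
      rw [pin n hn]; positivity
    · rw [hpsupp n hn]
  · exact hpsupp 0 (by simp)
  · rw [s2.tsum_eq, s3.tsum_eq, Theta]
    have e1 : (1 + x) / x - 1 = x⁻¹ := by field_simp; ring
    have e2 : 1 - ((1 + x) / x)⁻¹ = (1 + x)⁻¹ := by field_simp; ring
    rw [e1, e2, Real.log_inv, Real.log_inv, Real.log_div (by positivity) (by positivity)]
    field_simp
    ring

/-- **The maximum of the support via free cumulants (positive cumulants).**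
Let `μ` be a compactly supported probability measure on `[0, ∞)` whose free cumulants
`k_j` (defined through the free moment–cumulant formula) are all strictly positive. Then
the maximum `ρ_μ = inf {r | μ((r,∞)) = 0}` of the support of `μ` satisfies
`log ρ_μ = sup { (1/m₁(p)) ∑_n p_n log(k_n/p_n) + Θ(m₁(p))/m₁(p) : p ∈ 𝔐₁¹({1,2,…}) }`. -/
theorem support_edge_of_positive_free_cumulants
    (μ : Measure ℝ) [IsProbabilityMeasure μ]
    (hnonneg : μ (Set.Iio 0) = 0) (hcpt : ∃ R : ℝ, μ (Set.Ioi R) = 0)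
    (k : ℕ → ℝ) (hkpos : ∀ j, 1 ≤ j → 0 < k j)
    (hmc : ∀ n : ℕ, 1 ≤ n →
      ∫ t, t ^ n ∂μ = ∑ π ∈ NCP n, ∏ V ∈ π, k V.card) :
    Real.log (sInf {r : ℝ | μ (Set.Ioi r) = 0}) =
      sSup {v : ℝ | ∃ p : ℕ → ℝ, (∀ n, 0 ≤ p n) ∧ p 0 = 0 ∧ HasSum p 1 ∧
        Summable (fun n : ℕ => (n : ℝ) * p n) ∧
        Summable (fun n : ℕ => p n * Real.log (k n / p n)) ∧
        v = (∑' n : ℕ, (n : ℝ) * p n)⁻¹ * (∑' n : ℕ, p n * Real.log (k n / p n))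
            + Theta (∑' n : ℕ, (n : ℝ) * p n) / (∑' n : ℕ, (n : ℝ) * p n)} := by
  set T : Set ℝ := {r : ℝ | μ (Set.Ioi r) = 0} with hTdef
  have hm : ∀ n, ∫ t, t ^ n ∂μ = uu k 0 n := by
    intro n
    rcases n with _ | n
    · simp [uu_zero]
    · rw [hmc (n + 1) (by omega), moment_eq]
  have hae0 : ∀ᵐ t ∂μ, 0 ≤ t := by
    rw [ae_iff]
    convert hnonneg using 2
    ext t; simp
  have hae : ∀ r ∈ T, ∀ᵐ t ∂μ, t ≤ r := by
    intro r hr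
    rw [ae_iff]
    have hr' : μ (Set.Ioi r) = 0 := hr
    convert hr' using 2
    ext t; simp
  have hmom : ∀ r ∈ T, ∀ n, uu k 0 n ≤ r ^ n := by
    intro r hr n
    rw [← hm n]
    have : ∫ t, t ^ n ∂μ ≤ ∫ _, r ^ n ∂μ := by
      refine integral_mono_of_nonneg ?_ (integrable_const _) ?_
      · filter_upwards [hae0] with t ht using pow_nonneg ht n
      · filter_upwards [hae0, hae r hr] with t ht ht' using pow_le_pow_left₀ ht ht' n
    simpa using this
  have hk1 : 0 < k 1 := hkpos 1 le_rfl
  have hTk : ∀ r ∈ T, k 1 ≤ r := by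
    intro r hr
    have := hmom r hr 1
    rw [uu_rec] at this
    simpa [uu_zero] using this
  have hTne : T.Nonempty := hcpt
  have hTb : BddBelow T := ⟨k 1, hTk⟩
  have hρ : 0 < sInf T := lt_of_lt_of_le hk1 (le_csInf hTne hTk)
  obtain ⟨R, hR⟩ := hcpt
  have hR0 : 0 ≤ R := hk1.le.trans (hTk R hR)
  have hint : ∀ n : ℕ, Integrable (fun t : ℝ => t ^ n) μ := by
    intro n
    refine Integrable.of_bound (by fun_prop) (R ^ n) ?_
    filter_upwards [hae0, hae R hR] with t ht ht'
    rw [Real.norm_of_nonneg (pow_nonneg ht n)]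
    exact pow_le_pow_left₀ ht ht' n
  set F : Set ℝ := {v : ℝ | ∃ p : ℕ → ℝ, (∀ n, 0 ≤ p n) ∧ p 0 = 0 ∧ HasSum p 1 ∧
        Summable (fun n : ℕ => (n : ℝ) * p n) ∧
        Summable (fun n : ℕ => p n * Real.log (k n / p n)) ∧
        v = (∑' n : ℕ, (n : ℝ) * p n)⁻¹ * (∑' n : ℕ, p n * Real.log (k n / p n))
            + Theta (∑' n : ℕ, (n : ℝ) * p n) / (∑' n : ℕ, (n : ℝ) * p n)} with hF
  -- upper bound
  have hup : ∀ v ∈ F, v ≤ Real.log (sInf T) := by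
    rintro v ⟨p, hp, hp0, hp1, hpm, hpl, rfl⟩
    have hr : ∀ r, sInf T < r → (∑' n : ℕ, (n : ℝ) * p n)⁻¹ * (∑' n : ℕ, p n * Real.log (k n / p n))
            + Theta (∑' n : ℕ, (n : ℝ) * p n) / (∑' n : ℕ, (n : ℝ) * p n) ≤ Real.log r := by
      intro r hr
      obtain ⟨r', hr'T, hr'⟩ := exists_lt_of_csInf_lt hTne hr
      have hr'0 : 0 < r' := hk1.trans_le (hTk r' hr'T)
      have hr0 : 0 < r := hr'0.trans hr'
      have hz : 0 < r⁻¹ := by positivity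
      have hs : Summable fun i => uu k 0 i * r⁻¹ ^ i := by
        refine Summable.of_nonneg_of_le
          (fun i => mul_nonneg (uu_nonneg k hkpos _ _) (by positivity)) (fun i => ?_)
          (summable_geometric_of_lt_one (r := r' * r⁻¹) (by positivity) ?_)
        · rw [mul_pow]
          exact mul_le_mul_of_nonneg_right (hmom r' hr'T i) (by positivity)
        · rw [← div_eq_mul_inv, div_lt_one hr0]; exact hr'
      set M := ∑' i, uu k 0 i * r⁻¹ ^ i with hM
      have hM1 : 1 ≤ M := by
        have := hs.le_tsum 0 (fun i _ => mul_nonneg (uu_nonneg k hkpos _ _) (by positivity))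
        rw [uu_zero, pow_zero, mul_one] at this
        exact this
      have hcb := cumulant_bound k hkpos r⁻¹ hz hs
      rw [← hM] at hcb
      have hx : 0 < M - 1 := by
        refine lt_of_lt_of_le ?_ (hcb 1)
        simp
        positivity
      have := var_upper k hkpos (r⁻¹ * M) (M - 1) (by positivity) hx hcb p hp hp0 hp1 hpm hpl
      have e : (1 + (M - 1)) / (r⁻¹ * M) = r := by
        field_simp; ring
      rwa [e] at this
    by_contra hcon
    push Not at hcon
    rw [Real.log_lt_iff_lt_exp hρ] at hcon
    obtain ⟨r, hr1, hr2⟩ := exists_between hcon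
    have h1 := hr r hr1
    rw [Real.le_log_iff_exp_le (hρ.trans hr1)] at h1
    linarith
  have hFb : BddAbove F := ⟨_, hup⟩
  have hFne : F.Nonempty := by
    obtain ⟨w, hw, p, h1, h2, h3, h4, h5, h6⟩ := var_opt k hkpos 0
    exact ⟨_, p, h1, h2, h3, h4, h5, rfl⟩
  refine le_antisymm ?_ (csSup_le hFne hup)
  -- lower bound
  set s := Real.exp (sSup F) with hs
  have hs0 : 0 < s := Real.exp_pos _
  rw [Real.log_le_iff_le_exp hρ, ← hs]
  have hk2 : 0 < k 2 := hkpos 2 (by norm_num)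
  let A : ℕ → Set ℝ := fun N => {w | w ∈ Set.Icc 0 (s / k 2) ∧
    1 + ∑ t ∈ Finset.range (N + 2), k (t + 1) * w ^ (t + 1) ≤ s * w}
  have hmono : ∀ w : ℝ, 0 ≤ w → ∀ N N', N ≤ N' →
      ∑ t ∈ Finset.range N, k (t + 1) * w ^ (t + 1) ≤
      ∑ t ∈ Finset.range N', k (t + 1) * w ^ (t + 1) := by
    intro w hw N N' h
    refine Finset.sum_le_sum_of_subset_of_nonneg (by simpa using h) fun i _ _ => ?_
    exact mul_nonneg (hkpos _ (by omega)).le (by positivity)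
  have hAcl : ∀ N, IsClosed (A N) := by
    intro N
    refine IsClosed.and isClosed_Icc (isClosed_le ?_ ?_) <;> fun_prop
  have hAne : (⋂ N, A N).Nonempty := by
    refine IsCompact.nonempty_iInter_of_sequence_nonempty_isCompact_isClosed A ?_ ?_ ?_ hAcl
    · rintro N w ⟨h1, h2⟩
      refine ⟨h1, le_trans ?_ h2⟩
      have := hmono w h1.1 (N + 2) (N + 1 + 2) (by omega)
      linarith
    · intro N
      obtain ⟨w, hw, p, h1, h2, h3, h4, h5, h6⟩ := var_opt k hkpos N
      have hle := le_csSup hFb (show _ ∈ F from ⟨p, h1, h2, h3, h4, h5, h6⟩)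
      have hpos : 0 ≤ ∑ t ∈ Finset.range (N + 2), k (t + 1) * w ^ (t + 1) := by
        simpa using hmono w hw.le 0 (N + 2) (by omega)
      rw [Real.log_le_iff_le_exp (by positivity), ← hs, div_le_iff₀ hw] at hle
      refine ⟨w, ⟨hw.le, ?_⟩, hle⟩
      have h2' := hmono w hw.le 2 (N + 2) (by omega)
      rw [Finset.sum_range_succ, Finset.sum_range_one] at h2'
      norm_num at h2'
      rw [le_div_iff₀ hk2]
      have q : k 2 * w * w ≤ s * w := by
        have : 0 < k 1 * w := by positivity
        nlinarith
      have := le_of_mul_le_mul_right q hw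
      linarith
    · exact isCompact_Icc.of_isClosed_subset (hAcl 0) fun w hw => hw.1
  obtain ⟨w, hw⟩ := hAne
  rw [Set.mem_iInter] at hw
  have hw0 : 0 ≤ w := (hw 0).1.1
  have hX : ∀ N, 1 + ∑ t ∈ Finset.range N, k (t + 1) * (s⁻¹ * (s * w)) ^ (t + 1) ≤ s * w := by
    intro N
    rw [show s⁻¹ * (s * w) = w by field_simp]
    have h1 := (hw N).2
    have h2 := hmono w hw0 N (N + 2) (by omega)
    linarith
  have hmb := moment_bound k hkpos s⁻¹ (by positivity) (s * w) (by positivity) hX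
  have hterm : ∀ n, uu k 0 n ≤ s * w * s ^ n := by
    intro n
    have h1 := hmb (n + 1)
    rw [Finset.sum_range_succ] at h1
    have h2 : 0 ≤ ∑ i ∈ Finset.range n, uu k 0 i * s⁻¹ ^ i :=
      Finset.sum_nonneg fun i _ => mul_nonneg (uu_nonneg k hkpos _ _) (by positivity)
    have h3 : uu k 0 n * s⁻¹ ^ n ≤ s * w := by linarith
    rwa [inv_pow, ← div_eq_mul_inv, div_le_iff₀ (by positivity)] at h3
  refine le_of_forall_gt_imp_ge_of_dense fun r hr => csInf_le hTb ?_
  have hr0 : 0 < r := hs0.trans hr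
  have hbound : ∀ n : ℕ, μ.real (Set.Ioi r) ≤ s * w * (s / r) ^ n := by
    intro n
    have h1 := mul_meas_ge_le_integral_of_nonneg (μ := μ) (f := fun t : ℝ => t ^ n)
      (by filter_upwards [hae0] with t ht using pow_nonneg ht n) (hint n) (r ^ n)
    rw [hm n] at h1
    have h2 : μ.real (Set.Ioi r) ≤ μ.real {t : ℝ | r ^ n ≤ t ^ n} := by
      refine measureReal_mono ?_
      intro t ht
      exact pow_le_pow_left₀ hr0.le (le_of_lt ht) n
    have h3 : r ^ n * μ.real (Set.Ioi r) ≤ s * w * s ^ n :=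
      (mul_le_mul_of_nonneg_left h2 (by positivity)).trans (h1.trans (hterm n))
    rw [div_pow, ← mul_div_assoc, le_div_iff₀ (by positivity)]
    linarith
  have hlim : Filter.Tendsto (fun n : ℕ => s * w * (s / r) ^ n) Filter.atTop (nhds (s * w * 0)) :=
    (tendsto_pow_atTop_nhds_zero_of_lt_one (by positivity) ((div_lt_one hr0).2 hr)).const_mul _
  rw [mul_zero] at hlim
  have hz := ge_of_tendsto' hlim hbound
  have hz' : μ.real (Set.Ioi r) = 0 := le_antisymm hz measureReal_nonneg
  rw [measureReal_eq_zero_iff] at hz'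
  exact hz'

end
end

section
/- Let μ be a compactly supported Borel probability measure on ℝ whose free cumulants (k_n)_{n∈ℕ} are all nonnegative, i.e. ∫ tⁿ dμ(t) = ∑_{π ∈ NC(n)} ∏_{V block of π} k_{|V|} for all n ≥ 1 with k_n ≥ 0 for every n, and let L = {n ∈ ℕ : k_n ≠ 0}. Then the maximum ρ_μ of the support of μ satisfies log ρ_μ = sup{ (1/m₁(p)) ∑_{n∈L} p_n log(k_n / p_n) + Θ(m₁(p))/m₁(p) : p ∈ 𝔐₁¹(L) }. -/
open MeasureTheory Finset
open scoped ENNReal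

noncomputable section

/-! ### Combinatorics of non-crossing partitions -/

structure IsNC_s16 (S : Finset ℕ) (π : Finset (Finset ℕ)) : Prop where
  sub : ∀ V ∈ π, V ⊆ S
  ne : ∀ V ∈ π, V.Nonempty
  cover : ∀ a ∈ S, ∃ V ∈ π, a ∈ V
  disj : ∀ V₁ ∈ π, ∀ V₂ ∈ π, V₁ ≠ V₂ → V₁ ∩ V₂ = ∅
  nc : ¬ ∃ V₁ ∈ π, ∃ V₂ ∈ π, V₁ ≠ V₂ ∧ ∃ x₁ ∈ V₁, ∃ y₁ ∈ V₁, ∃ x₂ ∈ V₂, ∃ y₂ ∈ V₂,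
        x₁ < x₂ ∧ x₂ < y₁ ∧ y₁ < y₂

lemma mem_NCP_iff (n : ℕ) (π : Finset (Finset ℕ)) : π ∈ NCP n ↔ IsNC_s16 (Finset.Icc 1 n) π := by
  refine (@Finset.mem_filter _ _ (_) _ _).trans ?_
  rw [Finset.mem_powerset]
  constructor
  · rintro ⟨h0, h1, h2, h3, h4⟩
    exact ⟨fun V hV => Finset.mem_powerset.1 (h0 hV), h1, h2, h3, h4⟩
  · rintro ⟨h0, h1, h2, h3, h4⟩
    exact ⟨fun V hV => Finset.mem_powerset.2 (h0 V hV), h1, h2, h3, h4⟩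

lemma IsNC_s16.eq_of_mem {S π} (h : IsNC_s16 S π) {V₁ V₂ : Finset ℕ} (h1 : V₁ ∈ π) (h2 : V₂ ∈ π) {x : ℕ}
    (hx1 : x ∈ V₁) (hx2 : x ∈ V₂) : V₁ = V₂ := by
  by_contra hne
  have := h.disj V₁ h1 V₂ h2 hne
  have hx : x ∈ V₁ ∩ V₂ := Finset.mem_inter.2 ⟨hx1, hx2⟩
  rw [this] at hx
  simp at hx

open Classical in
/-- card of the block with minimum `i` (or zero). -/
def wt (π : Finset (Finset ℕ)) (i : ℕ) : ℕ :=
  ∑ V ∈ π.filter (fun V => i ∈ V ∧ ∀ j ∈ V, i ≤ j), V.card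

lemma wt_block {S π} (h : IsNC_s16 S π) {V : Finset ℕ} (hV : V ∈ π) {i : ℕ} (hi : i ∈ V)
    (hm : ∀ j ∈ V, i ≤ j) : wt π i = V.card := by
  unfold wt
  rw [Finset.sum_eq_single V]
  · intro W hW hne
    rw [Finset.mem_filter] at hW
    exact absurd (h.eq_of_mem hW.1 hV hW.2.1 hi) hne
  · intro hn
    exact absurd (Finset.mem_filter.2 ⟨hV, hi, hm⟩) hn

lemma wt_ne {π i} (h : wt π i ≠ 0) : ∃ V ∈ π, i ∈ V ∧ ∀ j ∈ V, i ≤ j := by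
  unfold wt at h
  obtain ⟨V, hV, _⟩ := Finset.exists_ne_zero_of_sum_ne_zero h
  rw [Finset.mem_filter] at hV
  exact ⟨V, hV.1, hV.2⟩

lemma exists_min {V : Finset ℕ} (h : V.Nonempty) : ∃ i ∈ V, ∀ j ∈ V, i ≤ j :=
  ⟨V.min' h, V.min'_mem h, fun j hj => V.min'_le j hj⟩

/-- block with the largest minimum is an interval -/
lemma last_block {S π} (h : IsNC_s16 S π) {V : Finset ℕ} (hV : V ∈ π) {i : ℕ} (hi : i ∈ V)
    (hm : ∀ j ∈ V, i ≤ j) (hlast : ∀ j, i < j → wt π j = 0) :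
    ∀ x ∈ S, i ≤ x → ∀ y ∈ V, x ≤ y → x ∈ V := by
  intro x hx hix y hy hxy
  obtain ⟨U, hU, hxU⟩ := h.cover x hx
  by_cases hUV : U = V
  · rwa [hUV] at hxU
  obtain ⟨u, hu, hum⟩ := exists_min (h.ne U hU)
  have hwu : wt π u ≠ 0 := by
    rw [wt_block h hU hu hum]
    exact (Finset.card_pos.2 (h.ne U hU)).ne'
  have hui : u ≤ i := by
    by_contra hc
    exact hwu (hlast u (by omega))
  have hui' : u < i := by
    rcases hui.lt_or_eq with h1 | h1
    · exact h1
    · subst h1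
      exact absurd (h.eq_of_mem hU hV hu hi) hUV
  have hxi : i < x := by
    rcases hix.lt_or_eq with h1 | h1
    · exact h1
    · subst h1
      exact absurd (h.eq_of_mem hU hV hxU hi) hUV
  have hxy' : x < y := by
    rcases hxy.lt_or_eq with h1 | h1
    · exact h1
    · subst h1
      exact absurd (h.eq_of_mem hU hV hxU hy) hUV
  exact absurd ⟨U, hU, V, hV, hUV, u, hu, x, hxU, i, hi, y, hy, hui', hxi, hxy'⟩ h.nc

lemma initial_unique {S V W : Finset ℕ} {i : ℕ} (hVS : ∀ x ∈ V, x ∈ S ∧ i ≤ x)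
    (hWS : ∀ x ∈ W, x ∈ S ∧ i ≤ x)
    (hV : ∀ x ∈ S, i ≤ x → ∀ y ∈ V, x ≤ y → x ∈ V)
    (hW : ∀ x ∈ S, i ≤ x → ∀ y ∈ W, x ≤ y → x ∈ W) (hc : V.card = W.card) : V = W := by
  by_cases hsub : V ⊆ W
  · exact Finset.eq_of_subset_of_card_le hsub hc.ge
  · obtain ⟨x, hxV, hxW⟩ := Finset.not_subset.1 hsub
    have : W ⊆ V := by
      intro y hy
      have hyx : y ≤ x := by
        by_contra hlt
        exact hxW (hW x (hVS x hxV).1 (hVS x hxV).2 y hy (by omega))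
      exact hV y (hWS y hy).1 (hWS y hy).2 x hxV hyx
    exact (Finset.eq_of_subset_of_card_le this hc.le).symm

lemma IsNC_s16.erase {S π} (h : IsNC_s16 S π) {V : Finset ℕ} (hV : V ∈ π) :
    IsNC_s16 (S \ V) (π.erase V) := by
  refine ⟨?_, ?_, ?_, ?_, ?_⟩
  · intro U hU x hx
    rw [Finset.mem_erase] at hU
    rw [Finset.mem_sdiff]
    exact ⟨h.sub U hU.2 hx, fun hxV => hU.1 (h.eq_of_mem hU.2 hV hx hxV)⟩
  · intro U hU
    exact h.ne U (Finset.mem_of_mem_erase hU)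
  · intro a ha
    rw [Finset.mem_sdiff] at ha
    obtain ⟨U, hU, haU⟩ := h.cover a ha.1
    refine ⟨U, Finset.mem_erase.2 ⟨?_, hU⟩, haU⟩
    rintro rfl
    exact ha.2 haU
  · intro U hU W hW
    exact h.disj U (Finset.mem_of_mem_erase hU) W (Finset.mem_of_mem_erase hW)
  · rintro ⟨U, hU, W, hW, hr⟩
    exact h.nc ⟨U, Finset.mem_of_mem_erase hU, W, Finset.mem_of_mem_erase hW, hr⟩

lemma wt_erase {S π} (h : IsNC_s16 S π) {V : Finset ℕ} (hV : V ∈ π) {i : ℕ} (hi : i ∈ V)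
    (hm : ∀ j ∈ V, i ≤ j) (j : ℕ) : wt (π.erase V) j = if j = i then 0 else wt π j := by
  split_ifs with hji
  · subst hji
    by_contra hc
    obtain ⟨U, hU, hjU, _⟩ := wt_ne hc
    rw [Finset.mem_erase] at hU
    exact hU.1 (h.eq_of_mem hU.2 hV hjU hi)
  · unfold wt
    congr 1
    ext U
    simp only [Finset.mem_filter, Finset.mem_erase]
    constructor
    · rintro ⟨⟨_, h1⟩, h2⟩
      exact ⟨h1, h2⟩
    · rintro ⟨h1, h2, h3⟩
      refine ⟨⟨?_, h1⟩, h2, h3⟩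
      rintro rfl
      exact hji (le_antisymm (h3 i hi) (hm j h2))

lemma wt_eq_zero {S π} (h : IsNC_s16 S π) {i : ℕ} (hi : i ∉ S) : wt π i = 0 := by
  by_contra hc
  obtain ⟨U, hU, hjU, _⟩ := wt_ne hc
  exact hi (h.sub U hU hjU)

lemma exists_last (S : Finset ℕ) (a : ℕ → ℕ) (h0 : ∀ i ∉ S, a i = 0) (hne : ∃ i, a i ≠ 0) :
    ∃ i ∈ S, a i ≠ 0 ∧ ∀ j, i < j → a j = 0 := by
  have hT : (S.filter (fun i => a i ≠ 0)).Nonempty := by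
    obtain ⟨i, hi⟩ := hne
    refine ⟨i, Finset.mem_filter.2 ⟨?_, hi⟩⟩
    by_contra hc
    exact hi (h0 i hc)
  have hmem := Finset.max'_mem _ hT
  refine ⟨_, (Finset.mem_filter.1 hmem).1, (Finset.mem_filter.1 hmem).2, ?_⟩
  intro j hj
  by_contra hc
  have hjS : j ∈ S := by
    by_contra hcc
    exact hc (h0 j hcc)
  have hle := Finset.le_max' (S.filter (fun i => a i ≠ 0)) j (Finset.mem_filter.2 ⟨hjS, hc⟩)
  omega

lemma wt_inj : ∀ (N : ℕ) (S : Finset ℕ) (π π' : Finset (Finset ℕ)), S.card = N → IsNC_s16 S π →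
    IsNC_s16 S π' → wt π = wt π' → π = π' := by
  intro N
  induction N using Nat.strong_induction_on with
  | _ N ih =>
  intro S π π' hN h h' hw
  by_cases hS : S = ∅
  · have key : ∀ ρ, IsNC_s16 S ρ → ρ = ∅ := by
      intro ρ hρ
      rw [Finset.eq_empty_iff_forall_notMem]
      intro V hV
      obtain ⟨x, hx⟩ := hρ.ne V hV
      have := hρ.sub V hV hx
      rw [hS] at this
      simp at this
    rw [key π h, key π' h']
  · obtain ⟨x, hx⟩ := Finset.nonempty_iff_ne_empty.2 hS
    have hne : ∃ i, wt π i ≠ 0 := by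
      obtain ⟨U, hU, hxU⟩ := h.cover x hx
      obtain ⟨u, hu, hum⟩ := exists_min (h.ne U hU)
      refine ⟨u, ?_⟩
      rw [wt_block h hU hu hum]
      exact (Finset.card_pos.2 (h.ne U hU)).ne'
    obtain ⟨i, hiS, hi, hlast⟩ := exists_last S (wt π) (fun i hi => wt_eq_zero h hi) hne
    obtain ⟨V, hV, hiV, hVm⟩ := wt_ne hi
    obtain ⟨V', hV', hiV', hVm'⟩ := wt_ne (hw ▸ hi : wt π' i ≠ 0)
    have hVV : V = V' := by
      refine initial_unique (S := S) (i := i) (fun x hx => ⟨h.sub V hV hx, hVm x hx⟩)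
        (fun x hx => ⟨h'.sub V' hV' hx, hVm' x hx⟩)
        (last_block h hV hiV hVm hlast) (last_block h' hV' hiV' hVm' (hw ▸ hlast)) ?_
      rw [← wt_block h hV hiV hVm, ← wt_block h' hV' hiV' hVm', hw]
    subst hVV
    have := ih (S \ V).card (by
      rw [← hN]
      exact Finset.card_lt_card (Finset.sdiff_ssubset (h.sub V hV) (h.ne V hV)))
      (S \ V) (π.erase V) (π'.erase V) rfl (h.erase hV) (h'.erase hV') (by
        funext j
        rw [wt_erase h hV hiV hVm, wt_erase h' hV' hiV hVm, hw])
    rw [← Finset.insert_erase hV, this, Finset.insert_erase hV']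

lemma exists_initial (T : Finset ℕ) : ∀ c ≤ T.card, ∃ V ⊆ T, V.card = c ∧
    ∀ x ∈ T, ∀ y ∈ V, x ≤ y → x ∈ V := by
  intro c
  induction c with
  | zero => intro _; exact ⟨∅, by simp, by simp, by simp⟩
  | succ c ih =>
    intro hc
    obtain ⟨V, hVT, hVc, hV⟩ := ih (by omega)
    have hne : (T \ V).Nonempty := by
      rw [← Finset.card_pos, Finset.card_sdiff_of_subset hVT]
      omega
    obtain ⟨m, hm, hmin⟩ := exists_min hne
    rw [Finset.mem_sdiff] at hm
    refine ⟨insert m V, Finset.insert_subset hm.1 hVT, by rw [Finset.card_insert_of_notMem hm.2, hVc], ?_⟩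
    intro x hx y hy hxy
    rw [Finset.mem_insert] at hy ⊢
    by_cases hxV : x ∈ V
    · exact Or.inr hxV
    rcases hy with rfl | hy
    · left
      exact le_antisymm hxy (hmin x (Finset.mem_sdiff.2 ⟨hx, hxV⟩))
    · exact Or.inr (hV x hx y hy hxy)

lemma IsNC_s16.insert {S V : Finset ℕ} {π} (h : IsNC_s16 (S \ V) π) (hVS : V ⊆ S) (hne : V.Nonempty)
    (hintv : ∀ x ∈ S, ∀ y ∈ V, ∀ z ∈ V, y ≤ x → x ≤ z → x ∈ V) : IsNC_s16 S (insert V π) := by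
  have hd : ∀ U ∈ π, ∀ x ∈ U, x ∉ V := fun U hU x hx => (Finset.mem_sdiff.1 (h.sub U hU hx)).2
  have hs : ∀ U ∈ π, ∀ x ∈ U, x ∈ S := fun U hU x hx => (Finset.mem_sdiff.1 (h.sub U hU hx)).1
  refine ⟨?_, ?_, ?_, ?_, ?_⟩
  · intro U hU
    rcases Finset.mem_insert.1 hU with rfl | hU
    · exact hVS
    · exact hs U hU
  · intro U hU
    rcases Finset.mem_insert.1 hU with rfl | hU
    · exact hne
    · exact h.ne U hU
  · intro a ha
    by_cases haV : a ∈ V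
    · exact ⟨V, Finset.mem_insert_self _ _, haV⟩
    · obtain ⟨U, hU, haU⟩ := h.cover a (Finset.mem_sdiff.2 ⟨ha, haV⟩)
      exact ⟨U, Finset.mem_insert_of_mem hU, haU⟩
  · intro U hU W hW hUW
    rw [Finset.eq_empty_iff_forall_notMem]
    intro x hx
    rw [Finset.mem_inter] at hx
    rcases Finset.mem_insert.1 hU with hU' | hU' <;> rcases Finset.mem_insert.1 hW with hW' | hW'
    · exact hUW (hU'.trans hW'.symm)
    · exact hd W hW' x hx.2 (hU' ▸ hx.1)
    · exact hd U hU' x hx.1 (hW' ▸ hx.2)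
    · exact hUW (h.eq_of_mem hU' hW' hx.1 hx.2)
  · rintro ⟨U, hU, W, hW, hUW, x₁, hx₁, y₁, hy₁, x₂, hx₂, y₂, hy₂, h1, h2, h3⟩
    rcases Finset.mem_insert.1 hU with hU' | hU' <;> rcases Finset.mem_insert.1 hW with hW' | hW'
    · exact hUW (hU'.trans hW'.symm)
    · rw [hU'] at hx₁ hy₁
      exact hd W hW' x₂ hx₂ (hintv x₂ (hs W hW' x₂ hx₂) x₁ hx₁ y₁ hy₁ h1.le h2.le)
    · rw [hW'] at hx₂ hy₂
      exact hd U hU' y₁ hy₁ (hintv y₁ (hs U hU' y₁ hy₁) x₂ hx₂ y₂ hy₂ h2.le h3.le)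
    · exact h.nc ⟨U, hU', W, hW', hUW, x₁, hx₁, y₁, hy₁, x₂, hx₂, y₂, hy₂, h1, h2, h3⟩

lemma wt_surj : ∀ (N : ℕ) (S : Finset ℕ) (a : ℕ → ℕ), S.card = N → (∀ i ∉ S, a i = 0) →
    (∀ j, (S.filter (· < j)).card ≤ ∑ i ∈ S.filter (· < j), a i) → ∑ i ∈ S, a i = S.card →
    ∃ π, IsNC_s16 S π ∧ wt π = a := by
  intro N
  induction N using Nat.strong_induction_on with
  | _ N ih =>
  intro S a hN h0 hpre htot
  by_cases hS : S = ∅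
  · subst hS
    refine ⟨∅, ⟨by simp, by simp, by simp, by simp, by simp⟩, ?_⟩
    funext i
    rw [h0 i (by simp)]
    simp [wt]
  · have hpos : 0 < S.card := Finset.card_pos.2 (Finset.nonempty_iff_ne_empty.2 hS)
    have hne : ∃ i, a i ≠ 0 := by
      by_contra hc
      push Not at hc
      rw [Finset.sum_eq_zero (fun i _ => hc i)] at htot
      omega
    obtain ⟨i, hiS, hi, hlast⟩ := exists_last S a h0 hne
    have hsplit := Finset.sum_filter_add_sum_filter_not S (· < i) a
    have hcsplit := Finset.card_filter_add_card_filter_not (s := S) (· < i)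
    have hrest : ∑ j ∈ S.filter (fun j => ¬ j < i), a j = a i := by
      refine Finset.sum_eq_single_of_mem i (Finset.mem_filter.2 ⟨hiS, by omega⟩) ?_
      intro j hj hji
      rw [Finset.mem_filter] at hj
      exact hlast j (by omega)
    have hcard : a i ≤ (S.filter (fun j => ¬ j < i)).card := by
      have := hpre i
      omega
    obtain ⟨V, hVT, hVc, hV⟩ := exists_initial _ _ hcard
    have hVS : ∀ x ∈ V, x ∈ S ∧ i ≤ x := by
      intro x hx
      have := Finset.mem_filter.1 (hVT hx)
      exact ⟨this.1, by omega⟩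
    have hVne : V.Nonempty := by
      rw [← Finset.card_pos]; omega
    have hiV : i ∈ V := by
      obtain ⟨y, hy⟩ := hVne
      exact hV i (Finset.mem_filter.2 ⟨hiS, by omega⟩) y hy (hVS y hy).2
    have hVsub : V ⊆ S := fun x hx => (hVS x hx).1
    have hcV : (S \ V).card = S.card - a i := by
      rw [Finset.card_sdiff_of_subset hVsub, hVc]
    have hsumV : ∑ j ∈ V, a j = a i := by
      refine Finset.sum_eq_single_of_mem i hiV ?_
      intro j hj hji
      exact hlast j (by have := (hVS j hj).2; omega)
    have hsumS : ∑ j ∈ S \ V, a j = S.card - a i := by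
      have := Finset.sum_sdiff hVsub (f := a)
      omega
    have ha' : ∀ j ∈ S \ V, Function.update a i 0 j = a j := by
      intro j hj
      rw [Finset.mem_sdiff] at hj
      rw [Function.update_of_ne]
      rintro rfl
      exact hj.2 hiV
    obtain ⟨π, hπ, hw⟩ := ih (S \ V).card (by
      rw [← hN]
      exact Finset.card_lt_card (Finset.sdiff_ssubset hVsub hVne)) (S \ V)
      (Function.update a i 0) rfl (by
        intro j hj
        by_cases hji : j = i
        · subst hji; simp
        rw [Function.update_of_ne hji]
        rw [Finset.mem_sdiff] at hj
        by_cases hjS : j ∈ S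
        · have hjV : j ∈ V := by tauto
          exact hlast j (by have := (hVS j hjV).2; omega)
        · exact h0 j hjS) (by
        intro j
        rw [Finset.sum_congr rfl (fun x hx => ha' x (Finset.mem_filter.1 hx).1)]
        by_cases hj : j ≤ i
        · have : (S \ V).filter (· < j) = S.filter (· < j) := by
            ext x
            simp only [Finset.mem_filter, Finset.mem_sdiff]
            constructor
            · rintro ⟨⟨h1, _⟩, h2⟩
              exact ⟨h1, h2⟩
            · rintro ⟨h1, h2⟩
              refine ⟨⟨h1, fun hx => ?_⟩, h2⟩
              have := (hVS x hx).2
              omega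
          rw [this]
          exact hpre j
        · have h1 : ∑ x ∈ (S \ V).filter (· < j), a x = ∑ x ∈ S \ V, a x := by
            refine Finset.sum_subset (Finset.filter_subset _ _) ?_
            intro x hx hx'
            rw [Finset.mem_filter] at hx'
            refine hlast x ?_
            by_contra hc
            exact hx' ⟨hx, by omega⟩
          rw [h1, hsumS, ← hcV]
          exact Finset.card_le_card (Finset.filter_subset _ _)) (by
        rw [Finset.sum_congr rfl ha', hsumS, hcV])
    have hVπ : V ∉ π := by
      intro hc
      exact (Finset.mem_sdiff.1 (hπ.sub V hc hiV)).2 hiV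
    have hins : IsNC_s16 S (insert V π) := hπ.insert hVsub hVne (by
      intro x hx y hy z hz hyx hxz
      have := (hVS y hy).2
      exact hV x (Finset.mem_filter.2 ⟨hx, by omega⟩) z hz hxz)
    refine ⟨insert V π, hins, ?_⟩
    funext j
    have hm : ∀ j ∈ V, i ≤ j := fun j hj => (hVS j hj).2
    by_cases hji : j = i
    · subst hji
      rw [wt_block hins (Finset.mem_insert_self _ _) hiV hm, hVc]
    · have := wt_erase hins (Finset.mem_insert_self _ _) hiV hm j
      rw [Finset.erase_insert hVπ, hw, if_neg hji, Function.update_of_ne hji] at this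
      exact this.symm

lemma prod_wt (k : ℕ → ℝ) {S π} (h : IsNC_s16 S π) :
    ∏ V ∈ π, k V.card = ∏ i ∈ S, (if wt π i = 0 then 1 else k (wt π i)) := by
  classical
  have hmin : ∀ V : Finset ℕ, ∃ i, V ∈ π → i ∈ V ∧ ∀ j ∈ V, i ≤ j := by
    intro V
    by_cases hV : V ∈ π
    · obtain ⟨i, hi, hm⟩ := exists_min (h.ne V hV)
      exact ⟨i, fun _ => ⟨hi, hm⟩⟩
    · exact ⟨0, fun hc => absurd hc hV⟩
  choose mn hmn using hmin
  have hinj : Set.InjOn mn (π : Set (Finset ℕ)) := by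
    intro U hU V hV huv
    have h1 := (hmn U hU).1
    have h2 := (hmn V hV).1
    rw [← huv] at h2
    exact h.eq_of_mem hU hV h1 h2
  have hsub : π.image mn ⊆ S := by
    intro x hx
    obtain ⟨V, hV, rfl⟩ := Finset.mem_image.1 hx
    exact h.sub V hV (hmn V hV).1
  rw [← Finset.prod_subset hsub, Finset.prod_image hinj]
  · refine Finset.prod_congr rfl fun V hV => ?_
    rw [wt_block h hV (hmn V hV).1 (hmn V hV).2, if_neg]
    exact (Finset.card_pos.2 (h.ne V hV)).ne'
  · intro x _ hx
    rw [if_pos]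
    by_contra hc
    obtain ⟨V, hV, hxV, hm⟩ := wt_ne hc
    refine hx (Finset.mem_image.2 ⟨V, hV, ?_⟩)
    exact le_antisymm ((hmn V hV).2 x hxV) (hm _ (hmn V hV).1)

lemma sum_wt {S π} (h : IsNC_s16 S π) : ∑ i ∈ S, wt π i = S.card := by
  classical
  have hmin : ∀ V : Finset ℕ, ∃ i, V ∈ π → i ∈ V ∧ ∀ j ∈ V, i ≤ j := by
    intro V
    by_cases hV : V ∈ π
    · obtain ⟨i, hi, hm⟩ := exists_min (h.ne V hV)
      exact ⟨i, fun _ => ⟨hi, hm⟩⟩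
    · exact ⟨0, fun hc => absurd hc hV⟩
  choose mn hmn using hmin
  have hinj : Set.InjOn mn (π : Set (Finset ℕ)) := by
    intro U hU V hV huv
    have h1 := (hmn U hU).1
    have h2 := (hmn V hV).1
    rw [← huv] at h2
    exact h.eq_of_mem hU hV h1 h2
  have hsub : π.image mn ⊆ S := by
    intro x hx
    obtain ⟨V, hV, rfl⟩ := Finset.mem_image.1 hx
    exact h.sub V hV (hmn V hV).1
  rw [← Finset.sum_subset hsub, Finset.sum_image hinj]
  · have hS : S = π.biUnion id := by
      ext x
      simp only [Finset.mem_biUnion, id]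
      exact ⟨fun hx => h.cover x hx, fun ⟨V, hV, hx⟩ => h.sub V hV hx⟩
    conv_rhs => rw [hS]
    rw [Finset.card_biUnion]
    · refine Finset.sum_congr rfl fun V hV => ?_
      rw [wt_block h hV (hmn V hV).1 (hmn V hV).2, id]
    · intro U hU V hV huv
      exact Finset.disjoint_iff_inter_eq_empty.2 (h.disj U hU V hV huv)
  · intro x _ hx
    by_contra hc
    obtain ⟨V, hV, hxV, hm⟩ := wt_ne hc
    refine hx (Finset.mem_image.2 ⟨V, hV, ?_⟩)
    exact le_antisymm ((hmn V hV).2 x hxV) (hm _ (hmn V hV).1)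

/-! ### Lukasiewicz words -/

/-- cumulants extended by `1` at `0`. -/
def kt (k : ℕ → ℝ) (n : ℕ) : ℝ := if n = 0 then 1 else k n

lemma kt_nonneg {k : ℕ → ℝ} (hk : ∀ n, 1 ≤ n → 0 ≤ k n) (n : ℕ) : 0 ≤ kt k n := by
  unfold kt
  split_ifs with h
  · exact zero_le_one
  · exact hk n (by omega)

lemma Icc_filter_lt (n j : ℕ) : (Finset.Icc 1 n).filter (· < j) =
    (Finset.range (min n (j - 1))).map ⟨Nat.succ, Nat.succ_injective⟩ := by
  ext x
  simp only [Finset.mem_filter, Finset.mem_Icc, Finset.mem_map, Finset.mem_range,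
    Function.Embedding.coeFn_mk]
  constructor
  · rintro ⟨⟨h1, h2⟩, h3⟩
    exact ⟨x - 1, by omega, by omega⟩
  · rintro ⟨y, hy, rfl⟩
    omega

lemma Icc_eq_map (n : ℕ) : Finset.Icc 1 n =
    (Finset.range n).map ⟨Nat.succ, Nat.succ_injective⟩ := by
  ext x
  simp only [Finset.mem_Icc, Finset.mem_map, Finset.mem_range,
    Function.Embedding.coeFn_mk]
  constructor
  · rintro ⟨h1, h2⟩
    exact ⟨x - 1, by omega, by omega⟩
  · rintro ⟨y, hy, rfl⟩
    omega

lemma prod_wt_range (k : ℕ → ℝ) {n : ℕ} {π} (h : IsNC_s16 (Finset.Icc 1 n) π) :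
    ∏ V ∈ π, k V.card = ∏ i ∈ Finset.range n, kt k (wt π (i + 1)) := by
  rw [prod_wt k h, Icc_eq_map, Finset.prod_map]
  rfl

lemma sum_wt_range {n : ℕ} {π} (h : IsNC_s16 (Finset.Icc 1 n) π) :
    ∑ i ∈ Finset.range n, wt π (i + 1) = n := by
  have := sum_wt h
  rw [Nat.card_Icc, Icc_eq_map, Finset.sum_map] at this
  simpa using this

lemma wt_inj_range {n : ℕ} {π π'} (h : IsNC_s16 (Finset.Icc 1 n) π) (h' : IsNC_s16 (Finset.Icc 1 n) π')
    (hw : ∀ i < n, wt π (i + 1) = wt π' (i + 1)) : π = π' := by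
  refine wt_inj _ _ π π' rfl h h' ?_
  funext i
  by_cases hi : i ∈ Finset.Icc 1 n
  · rw [Finset.mem_Icc] at hi
    have := hw (i - 1) (by omega)
    rwa [Nat.sub_add_cancel hi.1] at this
  · rw [wt_eq_zero h hi, wt_eq_zero h' hi]

/-- Upper bound. -/
lemma upper_bound {k : ℕ → ℝ} (hk : ∀ n, 1 ≤ n → 0 ≤ k n) (n : ℕ) {w : ℝ} (hw : 0 < w) :
    ∑ π ∈ NCP n, ∏ V ∈ π, k V.card ≤
      ((∑ a ∈ Finset.range (n + 1), kt k a * w ^ a) / w) ^ n := by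
  classical
  have h1 : ((∑ a ∈ Finset.range (n + 1), kt k a * w ^ a)) ^ n =
      ∑ x ∈ Fintype.piFinset (fun _ : Fin n => Finset.range (n + 1)),
        ∏ i : Fin n, (kt k (x i) * w ^ (x i)) := by
    rw [← Finset.prod_univ_sum (fun _ : Fin n => Finset.range (n + 1))
      (fun _ a => kt k a * w ^ a)]
    simp
  rw [div_pow, le_div_iff₀ (pow_pos hw n), h1, Finset.sum_mul]
  let W : Finset (Finset ℕ) → (Fin n → ℕ) := fun π i => wt π (i.1 + 1)
  have hinj : Set.InjOn W (NCP n : Set (Finset (Finset ℕ))) := by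
    intro π hπ π' hπ' hW
    refine wt_inj_range ((mem_NCP_iff _ _).1 hπ) ((mem_NCP_iff _ _).1 hπ') ?_
    intro i hi
    exact congrFun hW ⟨i, hi⟩
  have h2 : ∑ π ∈ NCP n, (∏ V ∈ π, k V.card) * w ^ n =
      ∑ x ∈ (NCP n).image W, ∏ i : Fin n, (kt k (x i) * w ^ (x i)) := by
    rw [Finset.sum_image hinj]
    refine Finset.sum_congr rfl fun π hπ => ?_
    have hnc := (mem_NCP_iff _ _).1 hπ
    rw [prod_wt_range k hnc, Finset.prod_mul_distrib, Finset.prod_pow_eq_pow_sum,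
      Finset.prod_range]
    congr 2
    conv_lhs => rw [← sum_wt_range hnc]
    rw [Finset.sum_range]
  rw [h2]
  refine Finset.sum_le_sum_of_subset_of_nonneg ?_ ?_
  · intro x hx
    obtain ⟨π, hπ, rfl⟩ := Finset.mem_image.1 hx
    have hnc := (mem_NCP_iff _ _).1 hπ
    rw [Fintype.mem_piFinset]
    intro i
    rw [Finset.mem_range]
    have := Finset.single_le_sum (f := fun i => wt π (i + 1)) (fun _ _ => Nat.zero_le _)
      (Finset.mem_range.2 i.2)
    rw [sum_wt_range hnc] at this
    exact Nat.lt_succ_of_le this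
  · intro x _ _
    exact Finset.prod_nonneg fun i _ => mul_nonneg (kt_nonneg hk _) (pow_nonneg hw.le _)

def consW (a : ℕ) (l : ℕ → ℕ) : ℕ → ℕ
  | 0 => a
  | n + 1 => l n

lemma consW_inj {a b : ℕ} {l l' : ℕ → ℕ} (h : consW a l = consW b l') : a = b ∧ l = l' :=
  ⟨congrFun h 0, funext fun n => congrFun h (n + 1)⟩

open Classical in
def words : ℕ → ℕ → Finset (ℕ → ℕ)
  | 0, h => if h = 0 then {fun _ => 0} else ∅
  | n + 1, h => (Finset.range (n + 2)).biUnion fun a =>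
      if 1 ≤ h + a then (words n (h + a - 1)).image (consW a) else ∅

def ff (k : ℕ → ℝ) : ℕ → ℕ → ℝ
  | 0, h => if h = 0 then 1 else 0
  | n + 1, h => ∑ a ∈ Finset.range (n + 2), if 1 ≤ h + a then kt k a * ff k n (h + a - 1) else 0

lemma ff_eq_words (k : ℕ → ℝ) (n : ℕ) : ∀ h,
    ff k n h = ∑ l ∈ words n h, ∏ i ∈ Finset.range n, kt k (l i) := by
  classical
  induction n with
  | zero =>
    intro h
    unfold ff words
    split_ifs <;> simp
  | succ n ih =>
    intro h
    unfold ff words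
    rw [Finset.sum_biUnion]
    · refine Finset.sum_congr rfl fun a _ => ?_
      split_ifs with ha
      · rw [Finset.sum_image (fun x _ y _ hxy => (consW_inj hxy).2), ih, Finset.mul_sum]
        refine Finset.sum_congr rfl fun l _ => ?_
        rw [Finset.prod_range_succ', mul_comm]
        rfl
      · simp
    · intro a _ b _ hab
      rw [Function.onFun, Finset.disjoint_left]
      intro x hx hx'
      split_ifs at hx with h1
      · split_ifs at hx' with h2
        · obtain ⟨l, _, rfl⟩ := Finset.mem_image.1 hx
          obtain ⟨l', _, hl⟩ := Finset.mem_image.1 hx'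
          exact hab (consW_inj hl).1.symm
        · simp at hx'
      · simp at hx

lemma words_prop (n : ℕ) : ∀ h l, l ∈ words n h → (∀ i, n ≤ i → l i = 0) ∧
    (∀ j ≤ n, j ≤ h + ∑ i ∈ Finset.range j, l i) ∧ h + ∑ i ∈ Finset.range n, l i = n := by
  classical
  induction n with
  | zero =>
    intro h l hl
    unfold words at hl
    split_ifs at hl with h0
    · rw [Finset.mem_singleton] at hl
      subst hl
      refine ⟨fun _ _ => rfl, fun j hj => by omega, by simpa using h0⟩
    · simp at hl
  | succ n ih =>
    intro h l hl
    unfold words at hl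
    rw [Finset.mem_biUnion] at hl
    obtain ⟨a, _, ha⟩ := hl
    split_ifs at ha with h1
    · obtain ⟨l', hl', rfl⟩ := Finset.mem_image.1 ha
      obtain ⟨i1, i2, i3⟩ := ih _ _ hl'
      have hs : ∀ j, ∑ i ∈ Finset.range (j + 1), consW a l' i =
          ∑ i ∈ Finset.range j, l' i + a := by
        intro j
        rw [Finset.sum_range_succ']
        rfl
      refine ⟨?_, ?_, ?_⟩
      · intro i hi
        obtain ⟨i, rfl⟩ : ∃ i', i = i' + 1 := ⟨i - 1, by omega⟩
        exact i1 i (by omega)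
      · intro j hj
        rcases j with _ | j
        · omega
        · have := i2 j (by omega)
          rw [hs]
          omega
      · rw [hs]
        omega
    · simp at ha

lemma words_surj {n : ℕ} {l : ℕ → ℕ} (hl : l ∈ words n 0) :
    ∃ π ∈ NCP n, (∀ i, wt π (i + 1) = l i) := by
  obtain ⟨h1, h2, h3⟩ := words_prop n 0 l hl
  obtain ⟨π, hπ, hw⟩ := wt_surj _ (Finset.Icc 1 n) (fun i => if i = 0 then 0 else l (i - 1)) rfl
    (by
      intro i hi
      rw [Finset.mem_Icc] at hi
      split_ifs with h0
      · rfl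
      · exact h1 _ (by omega))
    (by
      intro j
      rw [Icc_filter_lt, Finset.card_map, Finset.card_range, Finset.sum_map]
      have := h2 (min n (j - 1)) (min_le_left _ _)
      simpa using this)
    (by
      rw [Nat.card_Icc, Icc_eq_map, Finset.sum_map]
      simpa using h3)
  refine ⟨π, (mem_NCP_iff _ _).2 hπ, ?_⟩
  intro i
  rw [hw]
  simp

lemma ff_le_moment {k : ℕ → ℝ} (hk : ∀ n, 1 ≤ n → 0 ≤ k n) (n : ℕ) :
    ff k n 0 ≤ ∑ π ∈ NCP n, ∏ V ∈ π, k V.card := by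
  classical
  rw [ff_eq_words]
  have hex : ∀ l : ℕ → ℕ, ∃ π, l ∈ words n 0 → π ∈ NCP n ∧ ∀ i, wt π (i + 1) = l i := by
    intro l
    by_cases hl : l ∈ words n 0
    · obtain ⟨π, h1, h2⟩ := words_surj hl
      exact ⟨π, fun _ => ⟨h1, h2⟩⟩
    · exact ⟨∅, fun hc => absurd hc hl⟩
  choose P hP using hex
  have hinj : Set.InjOn P (words n 0 : Set (ℕ → ℕ)) := by
    intro l hl l' hl' hll
    funext i
    rw [← (hP l hl).2 i, ← (hP l' hl').2 i, hll]
  have h1 : ∑ l ∈ words n 0, ∏ i ∈ Finset.range n, kt k (l i) =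
      ∑ π ∈ (words n 0).image P, ∏ V ∈ π, k V.card := by
    rw [Finset.sum_image hinj]
    refine Finset.sum_congr rfl fun l hl => ?_
    rw [prod_wt_range k ((mem_NCP_iff _ _).1 (hP l hl).1)]
    exact Finset.prod_congr rfl fun i _ => by rw [(hP l hl).2 i]
  rw [h1]
  refine Finset.sum_le_sum_of_subset_of_nonneg ?_ ?_
  · intro π hπ
    obtain ⟨l, hl, rfl⟩ := Finset.mem_image.1 hπ
    exact (hP l hl).1
  · intro π hπ _
    rw [prod_wt_range k ((mem_NCP_iff _ _).1 hπ)]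
    exact Finset.prod_nonneg fun i _ => kt_nonneg hk _

lemma ff_nonneg {k : ℕ → ℝ} (hk : ∀ n, 1 ≤ n → 0 ≤ k n) (n h : ℕ) : 0 ≤ ff k n h := by
  rw [ff_eq_words]
  exact Finset.sum_nonneg fun l _ => Finset.prod_nonneg fun i _ => kt_nonneg hk _

lemma ff_zero_of_lt (k : ℕ → ℝ) (n : ℕ) : ∀ h, n < h → ff k n h = 0 := by
  induction n with
  | zero => intro h hh; unfold ff; rw [if_neg (by omega)]
  | succ n ih =>
    intro h hh
    unfold ff
    refine Finset.sum_eq_zero fun a _ => ?_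
    rw [if_pos (by omega), ih _ (by omega), mul_zero]

lemma ff_succ (k : ℕ → ℝ) (n h N : ℕ) (hN : n + 2 ≤ N) : ff k (n + 1) h =
    ∑ a ∈ Finset.range N, if 1 ≤ h + a then kt k a * ff k n (h + a - 1) else 0 := by
  conv_lhs => unfold ff
  refine Finset.sum_subset (Finset.range_mono hN) ?_
  intro a _ ha
  rw [Finset.mem_range] at ha
  rw [if_pos (by omega), ff_zero_of_lt k n _ (by omega), mul_zero]

lemma ff_conv (k : ℕ → ℝ) (h' : ℕ) (n : ℕ) : ∀ h, ff k (n + 1) (h + h' + 1) =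
    ∑ ij ∈ Finset.HasAntidiagonal.antidiagonal n, ff k ij.1 h * ff k ij.2 h' := by
  induction n with
  | zero =>
    intro h
    rw [ff_succ k 0 _ 2 (by omega)]
    simp only [Finset.sum_range_succ, Finset.sum_range_zero, ff, kt]
    by_cases h1 : h = 0 <;> by_cases h2 : h' = 0 <;> simp [h1, h2, ff]
  | succ n ih =>
    intro h
    rw [ff_succ k (n + 1) _ (n + 3) (by omega), Finset.Nat.antidiagonal_succ, Finset.sum_cons,
      Finset.sum_map]
    have h1 : ∀ ij ∈ Finset.HasAntidiagonal.antidiagonal n, ff k (ij.1 + 1) h * ff k ij.2 h' =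
        ∑ a ∈ Finset.range (n + 3), if 1 ≤ h + a then
          kt k a * (ff k ij.1 (h + a - 1) * ff k ij.2 h') else 0 := by
      intro ij hij
      have := Finset.HasAntidiagonal.mem_antidiagonal.1 hij
      rw [ff_succ k ij.1 h (n + 3) (by omega), Finset.sum_mul]
      refine Finset.sum_congr rfl fun a _ => ?_
      split_ifs
      · ring
      · simp
    have h2 : ∑ ij ∈ Finset.HasAntidiagonal.antidiagonal n, ff k (ij.1 + 1) h * ff k ij.2 h' =
        ∑ a ∈ Finset.range (n + 3), if 1 ≤ h + a then
          kt k a * ff k (n + 1) (h + a - 1 + h' + 1) else 0 := by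
      rw [Finset.sum_congr rfl h1, Finset.sum_comm]
      refine Finset.sum_congr rfl fun a _ => ?_
      split_ifs
      · rw [← Finset.mul_sum, ih]
      · simp
    have h3 : ∑ x ∈ Finset.HasAntidiagonal.antidiagonal n, ff k (((⟨Nat.succ, Nat.succ_injective⟩ : ℕ ↪ ℕ).prodMap (Function.Embedding.refl ℕ)) x).1 h *
        ff k (((⟨Nat.succ, Nat.succ_injective⟩ : ℕ ↪ ℕ).prodMap (Function.Embedding.refl ℕ)) x).2 h' =
        ∑ ij ∈ Finset.HasAntidiagonal.antidiagonal n, ff k (ij.1 + 1) h * ff k ij.2 h' := rfl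
    rw [h3, h2, Finset.sum_range_succ', Finset.sum_range_succ' _ (n + 2)]
    have h4 : ∀ a ∈ Finset.range (n + 2),
        (if 1 ≤ h + h' + 1 + (a + 1) then kt k (a + 1) * ff k (n + 1) (h + h' + 1 + (a + 1) - 1) else 0)
        = (if 1 ≤ h + (a + 1) then kt k (a + 1) * ff k (n + 1) (h + (a + 1) - 1 + h' + 1) else 0) := by
      intro a _
      rw [if_pos (by omega), if_pos (by omega)]
      congr 2
      omega
    rw [Finset.sum_congr rfl h4]
    rcases h with _ | h
    · simp [ff, kt]; ring
    · have h5 : h + 1 + h' + 1 + 0 - 1 = h + 1 + 0 - 1 + h' + 1 := by omega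
      rw [if_pos (by omega), if_pos (by omega), h5]
      simp [ff]

/-! ### Generating functions -/

lemma ff_hasSum {k : ℕ → ℝ} (hk : ∀ n, 1 ≤ n → 0 ≤ k n) {x : ℝ} (hx : 0 < x)
    (hs : Summable fun n => ff k n 0 * x ^ n) (h : ℕ) :
    HasSum (fun n => ff k n h * x ^ n) (x ^ h * (∑' n, ff k n 0 * x ^ n) ^ (h + 1)) := by
  have hnn : ∀ h n, 0 ≤ ff k n h * x ^ n := fun h n =>
    mul_nonneg (ff_nonneg hk n h) (pow_nonneg hx.le n)
  induction h with
  | zero => simpa using hs.hasSum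
  | succ h ih =>
    set Φ := ∑' n, ff k n 0 * x ^ n
    have hs0 : Summable fun n => ‖ff k n 0 * x ^ n‖ := hs.norm
    have hsh : Summable fun n => ‖ff k n h * x ^ n‖ := ih.summable.norm
    have e1 := tsum_mul_tsum_eq_tsum_sum_antidiagonal_of_summable_norm hs0 hsh
    have e2 := (summable_norm_sum_mul_antidiagonal_of_summable_norm hs0 hsh).of_norm
    rw [ih.tsum_eq] at e1
    have e3 := e2.hasSum
    rw [← e1] at e3
    have e4 := e3.mul_left x
    have e5 : (fun n => x * ∑ kl ∈ Finset.HasAntidiagonal.antidiagonal n,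
        ff k kl.1 0 * x ^ kl.1 * (ff k kl.2 h * x ^ kl.2)) =
        fun n => ff k (n + 1) (h + 1) * x ^ (n + 1) := by
      funext n
      have := ff_conv k h n 0
      rw [zero_add] at this
      rw [this, Finset.sum_mul, Finset.mul_sum]
      refine Finset.sum_congr rfl fun ij hij => ?_
      rw [← Finset.HasAntidiagonal.mem_antidiagonal.1 hij]
      ring
    rw [e5] at e4
    have e6 := (hasSum_nat_add_iff (f := fun n => ff k n (h + 1) * x ^ n) 1).1 e4
    have e7 : ff k 0 (h + 1) = 0 := ff_zero_of_lt k 0 _ (by omega)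
    simp only [Finset.sum_range_one, e7, zero_mul, add_zero] at e6
    have e8 : x ^ (h + 1) * Φ ^ (h + 1 + 1) = x * (Φ * (x ^ h * Φ ^ (h + 1))) := by ring
    rw [e8]
    exact e6

lemma gen_bound {k : ℕ → ℝ} (hk : ∀ n, 1 ≤ n → 0 ≤ k n) {x : ℝ} (hx : 0 < x)
    (hs : Summable fun n => ff k n 0 * x ^ n) :
    ∃ Φ : ℝ, 1 ≤ Φ ∧ ∀ N, ∑ a ∈ Finset.range N, k (a + 1) * (x * Φ) ^ (a + 1) ≤ Φ - 1 := by
  refine ⟨∑' n, ff k n 0 * x ^ n, ?_, ?_⟩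
  · have := hs.le_tsum 0 (fun n _ => mul_nonneg (ff_nonneg hk n 0) (pow_nonneg hx.le n))
    simpa [ff] using this
  · intro N
    have hsum := fun h => ff_hasSum hk hx hs h
    have hs1 := hsum 0
    set Φ := ∑' n, ff k n 0 * x ^ n
    have h1 : HasSum (fun n => ff k (n + 1) 0 * x ^ (n + 1)) (Φ - 1) := by
      refine (hasSum_nat_add_iff (f := fun n => ff k n 0 * x ^ n) 1).2 ?_
      simpa [ff] using hs1
    have h2 : HasSum (fun n => ∑ a ∈ Finset.range N, k (a + 1) * x * (ff k n a * x ^ n))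
        (∑ a ∈ Finset.range N, k (a + 1) * x * (x ^ a * Φ ^ (a + 1))) :=
      hasSum_sum fun a _ => (hsum a).mul_left _
    have h3 : ∑ a ∈ Finset.range N, k (a + 1) * (x * Φ) ^ (a + 1) =
        ∑ a ∈ Finset.range N, k (a + 1) * x * (x ^ a * Φ ^ (a + 1)) :=
      Finset.sum_congr rfl fun a _ => by ring
    rw [h3]
    refine hasSum_le ?_ h2 h1
    intro n
    have h4 : ff k (n + 1) 0 = ∑ a ∈ Finset.range (N + n + 1), k (a + 1) * ff k n a := by
      rw [ff_succ k n 0 (N + n + 2) (by omega), Finset.sum_range_succ']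
      simp [kt]
    rw [h4, Finset.sum_mul]
    have h5 : ∑ a ∈ Finset.range N, k (a + 1) * x * (ff k n a * x ^ n) =
        ∑ a ∈ Finset.range N, k (a + 1) * ff k n a * x ^ (n + 1) :=
      Finset.sum_congr rfl fun a _ => by ring
    rw [h5]
    refine Finset.sum_le_sum_of_subset_of_nonneg (Finset.range_mono (by omega)) ?_
    intro a _ _
    exact mul_nonneg (mul_nonneg (hk _ (by omega)) (ff_nonneg hk _ _)) (pow_nonneg hx.le _)

/-! ### Entropy inequality -/

lemma log_ineq {q c : ℝ} (hq : 0 ≤ q) (hc : 0 ≤ c) (h0 : c = 0 → q = 0) :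
    q * Real.log (c / q) ≤ c - q := by
  rcases hq.eq_or_lt with h | h
  · subst h; simpa using hc
  · have hc' : 0 < c := lt_of_le_of_ne hc (fun hh => h.ne' (h0 hh.symm))
    have := Real.log_le_sub_one_of_pos (div_pos hc' h)
    calc q * Real.log (c / q) ≤ q * (c / q - 1) := mul_le_mul_of_nonneg_left this h.le
      _ = c - q := by field_simp

lemma Theta_div {m : ℝ} (hm : 1 ≤ m) : Theta m / m =
    Real.log m / m - (1 - m⁻¹) * Real.log (1 - m⁻¹) := by
  have hm0 : 0 < m := by linarith
  rcases hm.eq_or_lt with h | h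
  · subst h; simp [Theta]
  · unfold Theta
    have e : m - 1 = m * (1 - m⁻¹) := by field_simp
    have h1 : 0 < 1 - m⁻¹ := by
      have := inv_lt_one_of_one_lt₀ h
      linarith
    rw [e, Real.log_mul hm0.ne' h1.ne']
    field_simp
    ring

lemma entropy_le {k : ℕ → ℝ} (hk : ∀ n, 1 ≤ n → 0 ≤ k n) {z Φ : ℝ} (hz : 0 < z) (hΦ : 1 ≤ Φ)
    (hb : ∀ N, ∑ a ∈ Finset.range N, k (a + 1) * (z⁻¹ * Φ) ^ (a + 1) ≤ Φ - 1)
    {p : ℕ → ℝ} (hp : ∀ n, 0 ≤ p n) (hp0 : p 0 = 0) (hp1 : HasSum p 1)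
    (hpk : ∀ n, k n = 0 → p n = 0) (hm : Summable (fun n : ℕ => (n : ℝ) * p n))
    (hl : Summable (fun n : ℕ => p n * Real.log (k n / p n))) :
    (∑' n : ℕ, (n : ℝ) * p n)⁻¹ * (∑' n : ℕ, p n * Real.log (k n / p n))
            + Theta (∑' n : ℕ, (n : ℝ) * p n) / (∑' n : ℕ, (n : ℝ) * p n) ≤ Real.log z := by
  set w := z⁻¹ * Φ with hw
  have hΦ0 : 0 < Φ := by linarith
  have hw0 : 0 < w := by positivity
  have hm1 := hm.hasSum
  have hl1 := hl.hasSum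
  set m := ∑' n : ℕ, (n : ℝ) * p n
  set S := ∑' n : ℕ, p n * Real.log (k n / p n)
  have hm_ge : 1 ≤ m := by
    refine hasSum_le ?_ hp1 hm1
    intro n
    rcases n with _ | n
    · simp [hp0]
    · have : (1 : ℝ) ≤ ((n + 1 : ℕ) : ℝ) := by push_cast; linarith [Nat.cast_nonneg (α := ℝ) n]
      nlinarith [hp (n + 1)]
  have hm0 : 0 < m := by linarith
  have hkw_nn : ∀ a, 0 ≤ k (a + 1) * w ^ (a + 1) := fun a =>
    mul_nonneg (hk _ (by omega)) (pow_nonneg hw0.le _)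
  have hks : Summable fun a => k (a + 1) * w ^ (a + 1) :=
    summable_of_sum_range_le hkw_nn hb
  have hkle : ∑' a, k (a + 1) * w ^ (a + 1) ≤ Φ - 1 :=
    Real.tsum_le_of_sum_range_le hkw_nn hb
  -- sum of the upper terms
  have hp1' : HasSum (fun n => p (n + 1)) 1 :=
    (hasSum_nat_add_iff (f := p) 1).2 (by simpa [hp0] using hp1)
  have hm1' : HasSum (fun n : ℕ => ((n + 1 : ℕ) : ℝ) * p (n + 1)) m :=
    (hasSum_nat_add_iff (f := fun n : ℕ => (n : ℝ) * p n) 1).2 (by simpa using hm1)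
  have hl1' : HasSum (fun n : ℕ => p (n + 1) * Real.log (k (n + 1) / p (n + 1))) S :=
    (hasSum_nat_add_iff (f := fun n : ℕ => p n * Real.log (k n / p n)) 1).2
      (by simpa [hp0] using hl1)
  have hL := ((hl1'.mul_left m⁻¹).add (hm1'.mul_left (m⁻¹ * Real.log w))).add
    (hp1'.mul_left (m⁻¹ * (Real.log m - Real.log Φ)))
  have hR := (hks.hasSum.mul_left Φ⁻¹).sub (hp1'.mul_left m⁻¹)
  have key := hasSum_le (fun n => ?_) hL hR
  · have q0 := log_ineq (q := 1 - m⁻¹) (c := Φ⁻¹) (by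
      have := inv_le_one_of_one_le₀ hm_ge
      linarith) (by positivity) (fun h => absurd h (by positivity))
    have q1 : (1 - m⁻¹) * Real.log (Φ⁻¹ / (1 - m⁻¹)) =
        - (1 - m⁻¹) * Real.log Φ - (1 - m⁻¹) * Real.log (1 - m⁻¹) := by
      by_cases h : 1 - m⁻¹ = 0
      · rw [h]; simp
      · rw [Real.log_div (by positivity) h, Real.log_inv]
        ring
    rw [q1] at q0
    have q2 : Φ⁻¹ * ∑' a, k (a + 1) * w ^ (a + 1) ≤ 1 - Φ⁻¹ := by
      calc _ ≤ Φ⁻¹ * (Φ - 1) := mul_le_mul_of_nonneg_left hkle (by positivity)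
        _ = 1 - Φ⁻¹ := by field_simp
    rw [Theta_div hm_ge]
    have q3 : Real.log w = Real.log Φ - Real.log z := by
      rw [hw, Real.log_mul (by positivity) hΦ0.ne', Real.log_inv]
      ring
    have q4 : m⁻¹ * Real.log w * m = Real.log w := by field_simp
    rw [q4, q3] at key
    have q5 : Real.log m / m = m⁻¹ * Real.log m := by ring
    rw [q5]
    nlinarith
  · -- termwise inequality
    have t := log_ineq (q := m⁻¹ * p (n + 1)) (c := Φ⁻¹ * (k (n + 1) * w ^ (n + 1)))
      (mul_nonneg (by positivity) (hp _)) (mul_nonneg (by positivity) (hkw_nn n)) (fun h => by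
        have : k (n + 1) = 0 := by
          have h1 : Φ⁻¹ ≠ 0 := by positivity
          have h2 : w ^ (n + 1) ≠ 0 := by positivity
          simpa [h1, h2] using h
        rw [hpk _ this, mul_zero])
    refine le_trans (le_of_eq ?_) t
    by_cases hpn : p (n + 1) = 0
    · simp [hpn]
    · have hkn : k (n + 1) ≠ 0 := fun h => hpn (hpk _ h)
      have h2 : w ^ (n + 1) ≠ 0 := by positivity
      rw [Real.log_div hkn hpn, Real.log_div (by positivity) (by positivity),
        Real.log_mul (inv_ne_zero hΦ0.ne') (mul_ne_zero hkn h2), Real.log_mul hkn h2,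
        Real.log_mul (inv_ne_zero hm0.ne') hpn, Real.log_inv, Real.log_inv, Real.log_pow]
      ring

/-! ### Optimisers for truncated series -/

lemma tilted {k : ℕ → ℝ} (hk : ∀ n, 1 ≤ n → 0 ≤ k n) {N b : ℕ} (hb : 2 ≤ b) (hbN : b ≤ N)
    (hkb : k b ≠ 0) : ∃ w : ℝ, 0 < w ∧ ∃ p : ℕ → ℝ, (∀ n, 0 ≤ p n) ∧ p 0 = 0 ∧ HasSum p 1 ∧
        (∀ n, k n = 0 → p n = 0) ∧
        Summable (fun n : ℕ => (n : ℝ) * p n) ∧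
        Summable (fun n : ℕ => p n * Real.log (k n / p n)) ∧
        Real.log ((∑ a ∈ Finset.range (N + 1), kt k a * w ^ a) / w) =
          (∑' n : ℕ, (n : ℝ) * p n)⁻¹ * (∑' n : ℕ, p n * Real.log (k n / p n))
            + Theta (∑' n : ℕ, (n : ℝ) * p n) / (∑' n : ℕ, (n : ℝ) * p n) := by
  have hkb0 : 0 < k b := lt_of_le_of_ne (hk b (by omega)) hkb.symm
  have hb1 : (1 : ℝ) ≤ (b : ℝ) - 1 := by
    have : (2 : ℝ) ≤ b := by exact_mod_cast hb
    linarith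
  let g : ℝ → ℝ := fun w => ∑ a ∈ Finset.Icc 1 N, ((a : ℝ) - 1) * k a * w ^ a
  have hgc : Continuous g := by
    unfold g
    fun_prop
  have hg0 : g 0 = 0 := by
    refine Finset.sum_eq_zero fun a ha => ?_
    rw [Finset.mem_Icc] at ha
    rw [zero_pow (by omega), mul_zero]
  have hgterm : ∀ w : ℝ, 0 ≤ w → ∀ a ∈ Finset.Icc 1 N, 0 ≤ ((a : ℝ) - 1) * k a * w ^ a := by
    intro w hw a ha
    rw [Finset.mem_Icc] at ha
    have : (1 : ℝ) ≤ a := by exact_mod_cast ha.1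
    exact mul_nonneg (mul_nonneg (by linarith) (hk a ha.1)) (pow_nonneg hw _)
  set W := 1 + (k b)⁻¹ with hW
  have hW1 : 1 ≤ W := by
    have : 0 < (k b)⁻¹ := by positivity
    linarith
  have hgW : 1 ≤ g W := by
    have h1 := Finset.single_le_sum (hgterm W (by linarith)) (Finset.mem_Icc.2 ⟨by omega, hbN⟩ : b ∈ _)
    refine le_trans ?_ h1
    have h2 : W ≤ W ^ b := le_self_pow₀ hW1 (by omega)
    have h3 : 1 ≤ k b * W := by
      rw [hW, mul_add, mul_inv_cancel₀ hkb]
      linarith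
    have h4 : 1 ≤ k b * W ^ b := h3.trans (mul_le_mul_of_nonneg_left h2 hkb0.le)
    rw [mul_assoc]
    nlinarith
  obtain ⟨w, hwI, hgw⟩ := intermediate_value_Icc (by linarith : (0:ℝ) ≤ W) hgc.continuousOn
    (show (1:ℝ) ∈ Set.Icc (g 0) (g W) from ⟨by rw [hg0]; norm_num, hgW⟩)
  have hw0 : 0 < w := by
    rcases hwI.1.eq_or_lt with h | h
    · rw [← h, hg0] at hgw
      norm_num at hgw
    · exact h
  set Q := ∑ a ∈ Finset.Icc 1 N, k a * w ^ a with hQ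
  have hQterm : ∀ a ∈ Finset.Icc 1 N, 0 ≤ k a * w ^ a := by
    intro a ha
    rw [Finset.mem_Icc] at ha
    exact mul_nonneg (hk a ha.1) (pow_nonneg hw0.le _)
  have hQ0 : 0 < Q := by
    refine lt_of_lt_of_le ?_ (Finset.single_le_sum hQterm
      (Finset.mem_Icc.2 ⟨by omega, hbN⟩ : b ∈ _))
    positivity
  have hQ1 : ∑ a ∈ Finset.range (N + 1), kt k a * w ^ a = 1 + Q := by
    rw [Finset.sum_range_succ', hQ, Icc_eq_map, Finset.sum_map]
    simp [kt, add_comm]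
  let p : ℕ → ℝ := fun n => if n ∈ Finset.Icc 1 N then k n * w ^ n / Q else 0
  have hpin : ∀ n ∈ Finset.Icc 1 N, p n = k n * w ^ n / Q := fun n hn => if_pos hn
  have hpout : ∀ n ∉ Finset.Icc 1 N, p n = 0 := fun n hn => if_neg hn
  have hp1 : HasSum p 1 := by
    have : HasSum p (∑ n ∈ Finset.Icc 1 N, p n) := hasSum_sum_of_ne_finset_zero hpout
    rwa [Finset.sum_congr rfl hpin, ← Finset.sum_div, ← hQ, div_self hQ0.ne'] at this
  have hm : HasSum (fun n : ℕ => (n : ℝ) * p n) ((1 + Q) / Q) := by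
    have : HasSum (fun n : ℕ => (n : ℝ) * p n) (∑ n ∈ Finset.Icc 1 N, (n : ℝ) * p n) :=
      hasSum_sum_of_ne_finset_zero (fun n hn => by simp only [hpout n hn, mul_zero])
    have e : ∑ n ∈ Finset.Icc 1 N, (n : ℝ) * p n = (1 + Q) / Q := by
      rw [Finset.sum_congr rfl (fun n hn => by rw [hpin n hn] :
        ∀ n ∈ Finset.Icc 1 N, (n : ℝ) * p n = (n : ℝ) * (k n * w ^ n / Q))]
      rw [eq_div_iff hQ0.ne', Finset.sum_mul, ← hgw, hQ, ← Finset.sum_add_distrib]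
      refine Finset.sum_congr rfl fun a _ => ?_
      rw [← hQ]
      field_simp
      ring
    rwa [e] at this
  have hlog : ∀ n, p n * Real.log (k n / p n) = Real.log Q * p n - Real.log w * ((n : ℝ) * p n) := by
    intro n
    by_cases hn : n ∈ Finset.Icc 1 N
    · by_cases hkn : k n = 0
      · rw [hpin n hn, hkn]; simp
      · have : k n / p n = Q / w ^ n := by
          rw [hpin n hn]
          field_simp
        rw [this, Real.log_div hQ0.ne' (by positivity), Real.log_pow]
        ring
    · rw [hpout n hn]; simp
  have hl : HasSum (fun n : ℕ => p n * Real.log (k n / p n))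
      (Real.log Q * 1 - Real.log w * ((1 + Q) / Q)) := by
    simp only [hlog]
    exact (hp1.mul_left _).sub (hm.mul_left _)
  refine ⟨w, hw0, p, ?_, ?_, hp1, ?_, hm.summable, hl.summable, ?_⟩
  · intro n
    by_cases hn : n ∈ Finset.Icc 1 N
    · rw [hpin n hn]
      exact div_nonneg (hQterm n hn) hQ0.le
    · rw [hpout n hn]
  · exact hpout 0 (by simp)
  · intro n hn
    by_cases hn' : n ∈ Finset.Icc 1 N
    · rw [hpin n hn', hn]; simp
    · rw [hpout n hn']
  · rw [hm.tsum_eq, hl.tsum_eq, hQ1]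
    have e1 : (1 + Q) / Q - 1 = Q⁻¹ := by field_simp; ring
    have e2 : 1 - ((1 + Q) / Q)⁻¹ = (1 + Q)⁻¹ := by field_simp; ring
    unfold Theta
    rw [e1, e2, Real.log_inv, Real.log_inv, Real.log_div (by positivity) hw0.ne']
    field_simp
    ring

/-! ### Measure theory -/

lemma tail_zero (μ : Measure ℝ) [IsProbabilityMeasure μ] {A : Set ℝ} {c r : ℝ} (hc : 0 < c)
    (hcr : c < r) (h : ∀ N : ℕ, ∃ n ≥ N, r ^ n * μ.real A ≤ c ^ n) : μ A = 0 := by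
  have hr : 0 < r := hc.trans hcr
  by_contra hne
  have hpos : 0 < μ.real A := by
    rw [measureReal_def]
    exact ENNReal.toReal_pos hne (measure_ne_top μ A)
  have ht := tendsto_pow_atTop_nhds_zero_of_lt_one (r := c / r) (by positivity)
    ((div_lt_one hr).2 hcr)
  obtain ⟨N, hN⟩ := Filter.eventually_atTop.1 (ht.eventually_lt_const hpos)
  obtain ⟨n, hn, hle⟩ := h N
  have := hN n hn
  rw [div_pow, div_lt_iff₀ (pow_pos hr n)] at this
  linarith

lemma moment_integrable (μ : Measure ℝ) [IsProbabilityMeasure μ]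
    (hcpt : ∃ R : ℝ, μ {x : ℝ | R < |x|} = 0) (n : ℕ) : Integrable (fun t : ℝ => t ^ n) μ := by
  obtain ⟨R, hR⟩ := hcpt
  refine Integrable.of_bound (by fun_prop) (|R| ^ n) ?_
  have : ∀ᵐ x ∂μ, ¬ (R < |x|) := by
    rw [ae_iff]; simpa using hR
  filter_upwards [this] with x hx
  rw [norm_pow, Real.norm_eq_abs]
  exact pow_le_pow_left₀ (abs_nonneg _) ((not_lt.1 hx).trans (le_abs_self R)) n

lemma upper_tail (μ : Measure ℝ) [IsProbabilityMeasure μ]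
    (hcpt : ∃ R : ℝ, μ {x : ℝ | R < |x|} = 0) {c r : ℝ} (hc : 0 < c) (hcr : c < r) {n0 : ℕ}
    (hm : ∀ n ≥ n0, ∫ t, t ^ n ∂μ ≤ c ^ n) : μ (Set.Ioi r) = 0 := by
  have hr : 0 < r := hc.trans hcr
  refine tail_zero μ hc hcr fun N => ⟨2 * (N + n0), by omega, ?_⟩
  have h1 := mul_meas_ge_le_integral_of_nonneg (μ := μ) (f := fun t : ℝ => t ^ (2 * (N + n0)))
    (Filter.Eventually.of_forall fun t => by
      simp only [Pi.zero_apply]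
      rw [pow_mul]
      positivity) (moment_integrable μ hcpt _) (r ^ (2 * (N + n0)))
  refine le_trans ?_ (h1.trans (hm _ (by omega)))
  refine mul_le_mul_of_nonneg_left ?_ (by positivity)
  refine measureReal_mono ?_
  intro t ht
  exact pow_le_pow_left₀ hr.le (le_of_lt ht) _

lemma lower_tail (μ : Measure ℝ) [IsProbabilityMeasure μ]
    (hcpt : ∃ R : ℝ, μ {x : ℝ | R < |x|} = 0) {c r : ℝ} (hc : 0 < c) (hcr : c < r)
    (hm : ∀ n : ℕ, 1 ≤ n → 0 ≤ ∫ t, t ^ n ∂μ) (hcz : μ (Set.Ioi c) = 0) :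
    μ (Set.Iio (-r)) = 0 := by
  have hr : 0 < r := hc.trans hcr
  refine tail_zero μ hc hcr fun N => ⟨2 * N + 1, by omega, ?_⟩
  have hodd : Odd (2 * N + 1) := ⟨N, rfl⟩
  have hae : ∀ᵐ x ∂μ, x ≤ c := by
    rw [ae_iff]
    simpa [Set.Ioi] using hcz
  have hintv := moment_integrable μ hcpt (2 * N + 1)
  have h1 := mul_meas_ge_le_integral_of_nonneg (μ := μ)
    (f := fun t : ℝ => c ^ (2 * N + 1) - t ^ (2 * N + 1))
    (by
      filter_upwards [hae] with x hx
      simp only [Pi.zero_apply, sub_nonneg]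
      exact hodd.strictMono_pow.monotone hx) ((integrable_const _).sub hintv) (r ^ (2 * N + 1))
  rw [integral_sub (integrable_const _) hintv] at h1
  simp only [integral_const, probReal_univ, one_smul] at h1
  have h2 : μ.real (Set.Iio (-r)) ≤ μ.real {x | r ^ (2 * N + 1) ≤ c ^ (2 * N + 1) - x ^ (2 * N + 1)} := by
    refine measureReal_mono ?_
    intro t ht
    have ht' : t ≤ -r := le_of_lt ht
    have h3 : t ^ (2 * N + 1) ≤ (-r) ^ (2 * N + 1) := hodd.strictMono_pow.monotone ht'
    rw [hodd.neg_pow] at h3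
    have h4 : 0 < c ^ (2 * N + 1) := by positivity
    simp only [Set.mem_ofPred_eq]
    linarith
  have h3 := mul_le_mul_of_nonneg_left h2 (by positivity : 0 ≤ r ^ (2 * N + 1))
  have h4 := hm (2 * N + 1) (by omega)
  linarith

lemma moment_le (μ : Measure ℝ) [IsProbabilityMeasure μ]
    (hcpt : ∃ R : ℝ, μ {x : ℝ | R < |x|} = 0) {c r : ℝ} (hc : 0 < c) (hcr : c < r)
    (hm : ∀ n : ℕ, 1 ≤ n → 0 ≤ ∫ t, t ^ n ∂μ) (hcz : μ (Set.Ioi c) = 0) (n : ℕ) :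
    ∫ t, t ^ n ∂μ ≤ r ^ n := by
  have hae : ∀ᵐ x ∂μ, x ≤ c := by
    rw [ae_iff]
    simpa [Set.Ioi] using hcz
  have hae' : ∀ᵐ x ∂μ, -r ≤ x := by
    rw [ae_iff]
    simpa [Set.Iio] using lower_tail μ hcpt hc hcr hm hcz
  have : ∫ t, t ^ n ∂μ ≤ ∫ _t, r ^ n ∂μ := by
    refine integral_mono_ae (moment_integrable μ hcpt n) (integrable_const _) ?_
    filter_upwards [hae, hae'] with x h1 h2
    refine (le_abs_self _).trans ?_
    rw [abs_pow]
    exact pow_le_pow_left₀ (abs_nonneg _) (abs_le.2 ⟨h2, by linarith⟩) n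
  simpa using this

/-- **The maximum of the support via free cumulants (nonnegative cumulants).**
Let `μ` be a compactly supported probability measure on `ℝ` whose free cumulants `k_n`
(defined by the free moment–cumulant formula) are all nonnegative, and let
`L = {n | k_n ≠ 0}`. Then the maximum `ρ_μ = inf {r | μ((r,∞)) = 0}` of the support of
`μ` satisfies
`log ρ_μ = sup { (1/m₁(p)) ∑_{n∈L} p_n log(k_n/p_n) + Θ(m₁(p))/m₁(p) : p ∈ 𝔐₁¹(L) }`. -/
theorem support_edge_of_nonneg_free_cumulants
    (μ : Measure ℝ) [IsProbabilityMeasure μ]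
    (hcpt : ∃ R : ℝ, μ {x : ℝ | R < |x|} = 0)
    (k : ℕ → ℝ) (hknn : ∀ n, 1 ≤ n → 0 ≤ k n)
    (hmc : ∀ n : ℕ, 1 ≤ n →
      ∫ t, t ^ n ∂μ = ∑ π ∈ NCP n, ∏ V ∈ π, k V.card) :
    Real.log (sInf {r : ℝ | μ (Set.Ioi r) = 0}) =
      sSup {v : ℝ | ∃ p : ℕ → ℝ, (∀ n, 0 ≤ p n) ∧ p 0 = 0 ∧ HasSum p 1 ∧
        (∀ n, k n = 0 → p n = 0) ∧
        Summable (fun n : ℕ => (n : ℝ) * p n) ∧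
        Summable (fun n : ℕ => p n * Real.log (k n / p n)) ∧
        v = (∑' n : ℕ, (n : ℝ) * p n)⁻¹ * (∑' n : ℕ, p n * Real.log (k n / p n))
            + Theta (∑' n : ℕ, (n : ℝ) * p n) / (∑' n : ℕ, (n : ℝ) * p n)} := by
  have hintv := moment_integrable μ hcpt
  have hF : ∀ n, 0 ≤ ff k n 0 := fun n => ff_nonneg hknn n 0
  have hmnn : ∀ n : ℕ, 1 ≤ n → 0 ≤ ∫ t, t ^ n ∂μ := fun n hn => by
    rw [hmc n hn]
    exact (hF n).trans (ff_le_moment hknn n)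
  have hbb : BddBelow {r : ℝ | μ (Set.Ioi r) = 0} := by
    obtain ⟨R, hR⟩ := hcpt
    refine ⟨-R, fun r hr => ?_⟩
    by_contra hlt
    push Not at hlt
    have h1 : (Set.univ : Set ℝ) ⊆ Set.Ioi r ∪ {x : ℝ | R < |x|} := by
      intro x _
      by_cases hx : r < x
      · exact Or.inl hx
      · right
        show R < |x|
        have := neg_abs_le x
        linarith
    have h2 := (measure_mono h1).trans (measure_union_le (μ := μ) _ _)
    rw [measure_univ, hR, (hr : μ (Set.Ioi r) = 0)] at h2
    simp at h2
  have hne : {r : ℝ | μ (Set.Ioi r) = 0}.Nonempty := by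
    obtain ⟨R, hR⟩ := hcpt
    refine ⟨R, measure_mono_null ?_ hR⟩
    intro x hx
    exact lt_of_lt_of_le hx (le_abs_self x)
  have hρle : ∀ r, μ (Set.Ioi r) = 0 → sInf {r : ℝ | μ (Set.Ioi r) = 0} ≤ r :=
    fun r hr => csInf_le hbb hr
  have hρgt : ∀ r, sInf {r : ℝ | μ (Set.Ioi r) = 0} < r → μ (Set.Ioi r) = 0 := by
    intro r hr
    obtain ⟨s, hs, hsr⟩ := exists_lt_of_csInf_lt hne hr
    exact measure_mono_null (Set.Ioi_subset_Ioi hsr.le) hs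
  set ρ := sInf {r : ℝ | μ (Set.Ioi r) = 0}
  -- moment bounds give bounds of `ρ`
  have hρc : ∀ c : ℝ, 0 < c → ∀ n0 : ℕ, (∀ n ≥ n0, ∫ t, t ^ n ∂μ ≤ c ^ n) → ρ ≤ c := by
    intro c hc n0 hn
    refine le_of_forall_gt_imp_ge_of_dense fun r hr => ?_
    exact hρle r (upper_tail μ hcpt hc hr hn)
  set A := {v : ℝ | ∃ p : ℕ → ℝ, (∀ n, 0 ≤ p n) ∧ p 0 = 0 ∧ HasSum p 1 ∧
        (∀ n, k n = 0 → p n = 0) ∧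
        Summable (fun n : ℕ => (n : ℝ) * p n) ∧
        Summable (fun n : ℕ => p n * Real.log (k n / p n)) ∧
        v = (∑' n : ℕ, (n : ℝ) * p n)⁻¹ * (∑' n : ℕ, p n * Real.log (k n / p n))
            + Theta (∑' n : ℕ, (n : ℝ) * p n) / (∑' n : ℕ, (n : ℝ) * p n)} with hA
  have hub : ∀ z, 0 < z → ρ < z → ∀ v ∈ A, v ≤ Real.log z := by
    rintro z hz hρz v ⟨p, hp, hp0, hp1, hpk, hm, hl, rfl⟩
    obtain ⟨c, hc1, hc2⟩ := exists_between (max_lt hz hρz)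
    obtain ⟨r, hr1, hr2⟩ := exists_between hc2
    have hc0 : 0 < c := (le_max_left _ _).trans_lt hc1
    have hr0 : 0 < r := hc0.trans hr1
    have hcz := hρgt c ((le_max_right _ _).trans_lt hc1)
    have hfle : ∀ n, ff k n 0 ≤ r ^ n := by
      intro n
      rcases n with _ | n
      · simp [ff]
      · have := ff_le_moment hknn (n + 1)
        rw [← hmc (n + 1) (by omega)] at this
        exact this.trans (moment_le μ hcpt hc0 hr1 hmnn hcz (n + 1))
    have hs : Summable fun n => ff k n 0 * (z⁻¹) ^ n := by
      refine Summable.of_nonneg_of_le (fun n => mul_nonneg (hF n) (by positivity)) (fun n => ?_)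
        (summable_geometric_of_lt_one (r := r / z) (by positivity) ((div_lt_one hz).2 hr2))
      rw [div_eq_mul_inv, mul_pow]
      exact mul_le_mul_of_nonneg_right (hfle n) (by positivity)
    obtain ⟨Φ, hΦ, hb⟩ := gen_bound hknn (inv_pos.2 hz) hs
    exact entropy_le hknn hz hΦ hb hp hp0 hp1 hpk hm hl
  by_cases hex : ∃ n, 1 ≤ n ∧ k n ≠ 0
  · -- nontrivial case
    have hmain : ∀ v ∈ A, 0 < ρ ∧ v ≤ Real.log ρ := by
      intro v hv
      have hρ : 0 < ρ := by
        by_contra hc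
        have := hub (Real.exp (v - 1)) (Real.exp_pos _)
          (lt_of_le_of_lt (not_lt.1 hc) (Real.exp_pos _)) v hv
        rw [Real.log_exp] at this
        linarith
      refine ⟨hρ, ?_⟩
      rw [Real.le_log_iff_exp_le hρ]
      refine le_of_forall_gt_imp_ge_of_dense fun z hz => ?_
      exact (Real.le_log_iff_exp_le (hρ.trans hz)).1 (hub z (hρ.trans hz) hz v hv)
    have hbdd : BddAbove A := ⟨Real.log ρ, fun v hv => (hmain v hv).2⟩
    by_cases hb : ∃ b, 2 ≤ b ∧ k b ≠ 0
    · obtain ⟨b, hb2, hkb⟩ := hb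
      have htl : ∀ n ≥ b, ∃ w : ℝ, 0 < w ∧
          Real.log ((∑ a ∈ Finset.range (n + 1), kt k a * w ^ a) / w) ∈ A := by
        intro n hn
        obtain ⟨w, hw, p, h1, h2, h3, h4, h5, h6, h7⟩ := tilted hknn hb2 hn hkb
        exact ⟨w, hw, p, h1, h2, h3, h4, h5, h6, h7⟩
      obtain ⟨w0, _, hw0⟩ := htl b le_rfl
      refine le_antisymm ?_ (csSup_le ⟨_, hw0⟩ fun v hv => (hmain v hv).2)
      rw [Real.log_le_iff_le_exp (hmain _ hw0).1]
      refine hρc _ (Real.exp_pos _) b fun n hn => ?_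
      rw [hmc n (by omega)]
      obtain ⟨w, hw, hv⟩ := htl n hn
      have hP : 0 < (∑ a ∈ Finset.range (n + 1), kt k a * w ^ a) / w := by
        refine div_pos ?_ hw
        rw [Finset.sum_range_succ']
        have : 0 ≤ ∑ i ∈ Finset.range n, kt k (i + 1) * w ^ (i + 1) :=
          Finset.sum_nonneg fun i _ => mul_nonneg (kt_nonneg hknn _) (by positivity)
        have h2 : kt k 0 * w ^ 0 = 1 := by simp [kt]
        linarith
      refine (upper_bound hknn n hw).trans (pow_le_pow_left₀ hP.le ?_ n)
      rw [← Real.log_le_iff_le_exp hP]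
      exact le_csSup hbdd hv
    · push Not at hb
      obtain ⟨b, hb1, hkb⟩ := hex
      have hb1' : b = 1 := by
        by_contra hc
        exact hkb (hb b (by omega))
      subst hb1'
      have hk1 : 0 < k 1 := lt_of_le_of_ne (hknn 1 le_rfl) hkb.symm
      have hmem : Real.log (k 1) ∈ A := by
        have hz : ∀ n : ℕ, n ≠ 1 → (Pi.single 1 1 : ℕ → ℝ) n = 0 := fun n hn =>
          Pi.single_eq_of_ne hn 1
        have h1 : (Pi.single 1 1 : ℕ → ℝ) 1 = 1 := Pi.single_eq_same 1 1
        have s1 : HasSum (Pi.single 1 1 : ℕ → ℝ) 1 := by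
          have := hasSum_single (f := (Pi.single 1 1 : ℕ → ℝ)) 1 hz
          rwa [h1] at this
        have s2 : HasSum (fun n : ℕ => (n : ℝ) * (Pi.single 1 1 : ℕ → ℝ) n) 1 := by
          have := hasSum_single (f := fun n : ℕ => (n : ℝ) * (Pi.single 1 1 : ℕ → ℝ) n) 1
            (fun n hn => by simp only [hz n hn, mul_zero])
          simpa [h1] using this
        have s3 : HasSum (fun n : ℕ => (Pi.single 1 1 : ℕ → ℝ) n *
            Real.log (k n / (Pi.single 1 1 : ℕ → ℝ) n)) (Real.log (k 1)) := by
          have := hasSum_single (f := fun n : ℕ => (Pi.single 1 1 : ℕ → ℝ) n *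
            Real.log (k n / (Pi.single 1 1 : ℕ → ℝ) n)) 1
            (fun n hn => by simp only [hz n hn, zero_mul])
          simpa [h1] using this
        refine ⟨Pi.single 1 1, ?_, hz 0 (by norm_num), s1, ?_, s2.summable, s3.summable, ?_⟩
        · intro n
          by_cases hn : n = 1
          · rw [hn, h1]; norm_num
          · rw [hz n hn]
        · intro n hn
          refine hz n ?_
          rintro rfl
          exact hkb hn
        · rw [s2.tsum_eq, s3.tsum_eq]
          simp [Theta]
      refine le_antisymm ?_ (csSup_le ⟨_, hmem⟩ fun v hv => (hmain v hv).2)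
      refine le_trans ?_ (le_csSup hbdd hmem)
      refine Real.log_le_log (hmain _ hmem).1 ?_
      refine le_of_forall_gt_imp_ge_of_dense fun c hc => ?_
      refine hρc c (hk1.trans hc) 1 fun n hn => ?_
      rw [hmc n hn]
      have hck : 0 < c - k 1 := by linarith
      refine (upper_bound hknn n (inv_pos.2 hck)).trans (le_of_eq ?_)
      congr 1
      obtain ⟨n, rfl⟩ : ∃ n', n = n' + 1 := ⟨n - 1, by omega⟩
      rw [Finset.sum_range_succ', Finset.sum_range_succ', Finset.sum_eq_zero]
      · simp only [kt]
        simp only [zero_add, one_ne_zero, if_false, if_true, pow_one, pow_zero, div_inv_eq_mul,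
          mul_one]
        rw [add_mul, mul_assoc, inv_mul_cancel₀ hck.ne']
        ring
      · intro i _
        have : kt k (i + 1 + 1) = 0 := by
          unfold kt
          rw [if_neg (by omega)]
          exact hb _ (by omega)
        rw [this, zero_mul]
  · push Not at hex
    have hAe : A = ∅ := by
      rw [Set.eq_empty_iff_forall_notMem]
      rintro v ⟨p, _, hp0, hp1, hpk, _⟩
      have : p = fun _ => 0 := by
        funext n
        rcases n with _ | n
        · exact hp0
        · exact hpk _ (hex _ (by omega))
      rw [this] at hp1
      exact zero_ne_one (hasSum_zero.unique hp1)
    have hup : ∀ c : ℝ, 0 < c → ρ ≤ c := by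
      intro c hc
      refine hρc c hc 1 fun n hn => ?_
      rw [hmc n hn]
      refine (upper_bound hknn n (inv_pos.2 hc)).trans (le_of_eq ?_)
      congr 1
      rw [Finset.sum_range_succ', Finset.sum_eq_zero]
      · simp [kt]
      · intro i _
        have : kt k (i + 1) = 0 := by
          unfold kt
          rw [if_neg (by omega)]
          exact hex _ (by omega)
        rw [this, zero_mul]
    have hρ0 : ρ = 0 := by
      refine le_antisymm (le_of_forall_gt_imp_ge_of_dense hup) ?_
      refine le_csInf hne fun r hr => ?_
      by_contra hlt
      push Not at hlt
      have hc : 0 < -r / 4 := by linarith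
      have h0 := lower_tail μ hcpt (c := -r / 4) (r := -r / 2) hc (by linarith) hmnn
        (hρgt _ (lt_of_le_of_lt (hup (-r / 8) (by linarith)) (by linarith)))
      have h1 : (Set.univ : Set ℝ) ⊆ Set.Ioi r ∪ Set.Iio (-(-r / 2)) := by
        intro x _
        by_cases hx : r < x
        · exact Or.inl hx
        · right
          show x < -(-r / 2)
          linarith
      have h2 := (measure_mono h1).trans (measure_union_le (μ := μ) _ _)
      rw [measure_univ, h0, (hr : μ (Set.Ioi r) = 0)] at h2
      simp at h2
    rw [hAe, hρ0, Real.sSup_empty, Real.log_zero]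

end
end
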